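/- arXiv:math/0510371 — 5 statements merged into one kernel-verified Lean document; each statement's English description precedes it below -/
import Mathlib

section
/- Let 0 < α ≤ 1 and let Λ ∈ ℂ with Im Λ ≠ 0. If w : ℤ → ℂ is a solution of the recurrence (1.eq) and satisfies ∑_{n∈ℤ} |w_n|² (n²+1)^{−1/2} < ∞, then w_n = 0 for all n ∈ ℤ. -/
/-!
After a gauge transformation by signs the recurrence becomes a Jacobi recurrence
`b_n w_{n+1} - q_n w_n + b_{n-1} w_{n-1} = 0` on `ℤ` with `b_n = |n + 1/2| ≥ 0`. Two quantities
are followed along a solution: the flux `b_n Im (w_{n+1} w̄_n)`, whose increments are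
`Im q_n |w_n|²`, and the energy `b_n Re ((w_{n+1} - w_n) w̄_n)`, whose increments are
`b_n |w_{n+1} - w_n|²` up to an error summable because `2/α ≥ 2` gives
`Re q_n ≥ b_n + b_{n-1} - O(1/|n|)`. The energy cannot stay positive, since `|w_n|` would then
increase and the weighted sum diverge; hence `∑ b_n |w_{n+1} - w_n|² < ∞`, and by AM-GM the flux is
summable against the non-summable weight `(n² + 1)^{-1/2}`. As `Im q_n` has constant sign the flux
is monotone, so it vanishes, and with it every `Im q_n |w_n|²`.
-/

open Complex

/-- A sequence `w : ℤ → ℂ` is a solution of the recurrence (1.eq):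
`(n+1/2) w_{n+1} - (2/α) √(n²-Λ) w_n + (n-1/2) w_{n-1} = 0` for all `n ∈ ℤ`,
where `√` is the principal branch of the complex square root. -/
def IsRecSolution (α : ℝ) (Λ : ℂ) (w : ℤ → ℂ) : Prop :=
  ∀ n : ℤ, ((n : ℂ) + 1 / 2) * w (n + 1)
      - (2 / (α : ℂ)) * (((n : ℂ) ^ 2 - Λ) ^ ((1 : ℂ) / 2)) * w n
      + ((n : ℂ) - 1 / 2) * w (n - 1) = 0

open Filter ComplexConjugate

section Summability

theorem not_summable_mul_of_eventually_le {ρ f : ℕ → ℝ} {c : ℝ} (hρ : ∀ n, 0 ≤ ρ n)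
    (hdiv : ¬ Summable ρ) (hc : 0 < c) (hf : ∀ᶠ n in atTop, c ≤ f n) :
    ¬ Summable fun n => f n * ρ n := by
  refine fun hs => hdiv (summable_of_isBigO_nat hs (.of_bound c⁻¹ ?_))
  filter_upwards [hf] with n hn
  have hfn : 0 ≤ f n := hc.le.trans hn
  rw [Real.norm_of_nonneg (hρ n), Real.norm_of_nonneg (mul_nonneg hfn (hρ n)),
    ← div_eq_inv_mul, le_div_iff₀ hc, mul_comm]
  exact mul_le_mul_of_nonneg_right hn (hρ n)

theorem nonpos_of_monotone_of_summable_mul {ρ f : ℕ → ℝ} (hf : Monotone f) (hρ : ∀ n, 0 ≤ ρ n)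
    (hdiv : ¬ Summable ρ) (hs : Summable fun n => |f n| * ρ n) (n : ℕ) : f n ≤ 0 := by
  by_contra! hn
  refine not_summable_mul_of_eventually_le hρ hdiv hn ?_ hs
  filter_upwards [eventually_ge_atTop n] with k hk
  exact (hf hk).trans (le_abs_self _)

theorem summable_of_le_sub_add {e S g : ℕ → ℝ} {c : ℝ} (he : ∀ n, 0 ≤ e n)
    (hstep : ∀ n, e n ≤ S (n + 1) - S n + g n) (hg : Summable g)
    (hS : ∃ᶠ n in atTop, S n ≤ c) : Summable e := by
  obtain ⟨M, hM⟩ := hg.hasSum.tendsto_sum_nat.bddAbove_range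
  refine summable_of_sum_range_le (c := c - S 0 + M) he fun n => ?_
  obtain ⟨m, hnm, hSm⟩ := frequently_atTop.1 hS n
  calc ∑ i ∈ Finset.range n, e i
      ≤ ∑ i ∈ Finset.range m, e i :=
        Finset.sum_le_sum_of_subset_of_nonneg (Finset.range_mono hnm) fun i _ _ => he i
    _ ≤ ∑ i ∈ Finset.range m, (S (i + 1) - S i + g i) := Finset.sum_le_sum fun i _ => hstep i
    _ = S m - S 0 + ∑ i ∈ Finset.range m, g i := by
        rw [Finset.sum_add_distrib, Finset.sum_range_sub]
    _ ≤ c - S 0 + M := by gcongr; exact hM ⟨m, rfl⟩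

end Summability

section Jacobi

variable {ι : Type*} [Add ι] [One ι]

/-- Solutions of the Jacobi recurrence with real off-diagonal coefficients `b` and diagonal
coefficients `q`. The index type is `ℤ` or `ℕ`; the recurrence is centred at `n + 1`, so that on
`ℕ` it imposes no boundary condition at `0`. -/
def IsJacobiSolution (b : ι → ℝ) (q w : ι → ℂ) : Prop :=
  ∀ n, b (n + 1) * w (n + 1 + 1) - q (n + 1) * w (n + 1) + b n * w n = 0

/-- The flux of `w` through the bond between `n` and `n + 1`: the weighted Wronskian of `w` and its
conjugate, divided by `2i` to make it real. -/
def jacobiFlux (b : ι → ℝ) (w : ι → ℂ) (n : ι) : ℝ :=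
  b n * (w (n + 1) * conj (w n)).im

/-- The boundary term at `n` in the summation by parts of `∑ b_n |w_{n+1} - w_n|²`, called the
energy; bounding it from above at infinitely many `n` bounds that sum. -/
def jacobiEnergy (b : ι → ℝ) (w : ι → ℂ) (n : ι) : ℝ :=
  b n * ((w (n + 1) - w n) * conj (w n)).re

variable {b : ι → ℝ} {q w : ι → ℂ}

theorem norm_lt_norm_of_jacobiEnergy_pos {n : ι} (hb : 0 ≤ b n) (hE : 0 < jacobiEnergy b w n) :
    ‖w n‖ < ‖w (n + 1)‖ := by
  have hre : 0 < ((w (n + 1) - w n) * conj (w n)).re := pos_of_mul_pos_right hE hb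
  rw [sub_mul, sub_re, mul_conj, ofReal_re, normSq_eq_norm_sq, sub_pos, sq] at hre
  refine lt_of_mul_lt_mul_right (hre.trans_le ?_) (norm_nonneg (w n))
  simpa using re_le_norm (w (n + 1) * conj (w n))

theorem abs_jacobiFlux_mul_le {n : ι} {r B : ℝ} (hb : 0 ≤ b n) (hr : 0 ≤ r) (hB : b n * r ≤ B) :
    |jacobiFlux b w n| * r ≤ b n * ‖w (n + 1) - w n‖ ^ 2 + B * (‖w n‖ ^ 2 * r) := by
  have hflux : |jacobiFlux b w n| ≤ b n * (‖w (n + 1) - w n‖ * ‖w n‖) := by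
    have him : (w (n + 1) * conj (w n)).im = ((w (n + 1) - w n) * conj (w n)).im := by
      rw [sub_mul, sub_im, mul_conj, ofReal_im, sub_zero]
    rw [jacobiFlux, him, abs_mul, abs_of_nonneg hb]
    gcongr
    simpa using abs_im_le_norm ((w (n + 1) - w n) * conj (w n))
  have hamgm : ‖w (n + 1) - w n‖ * (‖w n‖ * r) ≤ ‖w (n + 1) - w n‖ ^ 2 + (‖w n‖ * r) ^ 2 := by
    have hprod : 0 ≤ ‖w (n + 1) - w n‖ * (‖w n‖ * r) := by positivity
    linarith [two_mul_le_add_sq ‖w (n + 1) - w n‖ (‖w n‖ * r)]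
  calc |jacobiFlux b w n| * r
      ≤ b n * (‖w (n + 1) - w n‖ * ‖w n‖) * r := by gcongr
    _ = b n * (‖w (n + 1) - w n‖ * (‖w n‖ * r)) := by ring
    _ ≤ b n * (‖w (n + 1) - w n‖ ^ 2 + (‖w n‖ * r) ^ 2) := by gcongr
    _ = b n * ‖w (n + 1) - w n‖ ^ 2 + b n * r * (‖w n‖ ^ 2 * r) := by ring
    _ ≤ b n * ‖w (n + 1) - w n‖ ^ 2 + B * (‖w n‖ ^ 2 * r) := by gcongr

namespace IsJacobiSolution

theorem flux_add_one_sub_flux (h : IsJacobiSolution b q w) (n : ι) :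
    jacobiFlux b w (n + 1) - jacobiFlux b w n = (q (n + 1)).im * ‖w (n + 1)‖ ^ 2 := by
  have hmul := congrArg (fun z => (z * conj (w (n + 1))).im) (h n)
  simp only [jacobiFlux, ← normSq_eq_norm_sq, normSq_apply, mul_re, mul_im, add_re, add_im, sub_re,
    sub_im, conj_re, conj_im, ofReal_re, ofReal_im, zero_re, zero_im] at hmul ⊢
  linear_combination hmul

theorem flux_le_flux_add_one (h : IsJacobiSolution b q w) {n : ι} (hq : 0 ≤ (q (n + 1)).im) :
    jacobiFlux b w n ≤ jacobiFlux b w (n + 1) :=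
  sub_nonneg.1 <| h.flux_add_one_sub_flux n ▸ mul_nonneg hq (sq_nonneg _)

theorem energy_add_one_sub_energy (h : IsJacobiSolution b q w) (n : ι) :
    jacobiEnergy b w (n + 1) - jacobiEnergy b w n =
      b n * ‖w (n + 1) - w n‖ ^ 2 - (b (n + 1) + b n - (q (n + 1)).re) * ‖w (n + 1)‖ ^ 2 := by
  have hmul := congrArg (fun z => (z * conj (w (n + 1))).re) (h n)
  simp only [jacobiEnergy, ← normSq_eq_norm_sq, normSq_apply, mul_re, mul_im, add_re, add_im,
    sub_re, sub_im, conj_re, conj_im, ofReal_re, ofReal_im, zero_re, zero_im] at hmul ⊢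
  linear_combination hmul

theorem conj_comp (h : IsJacobiSolution b q w) :
    IsJacobiSolution b (fun n => conj (q n)) (fun n => conj (w n)) := fun n => by
  simpa using congrArg conj (h n)

theorem gauge (h : IsJacobiSolution b q w) {ε : ι → ℝ} (hε : ∀ n, ε n ^ 2 = 1) :
    IsJacobiSolution (fun n => ε n * ε (n + 1) * b n) q (fun n => ε n * w n) := fun n => by
  have hε₀ : (ε n : ℂ) ^ 2 = 1 := mod_cast hε n
  have hε₂ : (ε (n + 1 + 1) : ℂ) ^ 2 = 1 := mod_cast hε (n + 1 + 1)
  push_cast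
  linear_combination (ε (n + 1) : ℂ) * h n + ε (n + 1) * (b n * w n) * hε₀
    + ε (n + 1) * (b (n + 1) * w (n + 1 + 1)) * hε₂

end IsJacobiSolution

end Jacobi

section HalfLine

variable {b ρ : ℕ → ℝ} {q w : ℕ → ℂ} {B C : ℝ}

theorem frequently_jacobiEnergy_nonpos (hb : ∀ n, 0 ≤ b n) (hρ : ∀ n, 0 ≤ ρ n)
    (hdiv : ¬ Summable ρ) (hs : Summable fun n => ‖w n‖ ^ 2 * ρ n) :
    ∃ᶠ n in atTop, jacobiEnergy b w n ≤ 0 := by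
  intro hpos
  obtain ⟨N, hN⟩ := eventually_atTop.1 hpos
  have hlt : ∀ n ≥ N, ‖w n‖ < ‖w (n + 1)‖ := fun n hn =>
    norm_lt_norm_of_jacobiEnergy_pos (hb n) (not_le.1 (hN n hn))
  have hge : ∀ n ≥ N + 1, ‖w (N + 1)‖ ≤ ‖w n‖ := fun n hn => by
    induction n, hn using Nat.le_induction with
    | base => exact le_rfl
    | succ k hk ih => exact ih.trans (hlt k (by lia)).le
  have hN_pos : 0 < ‖w (N + 1)‖ := (norm_nonneg _).trans_lt (hlt N le_rfl)
  refine not_summable_mul_of_eventually_le hρ hdiv (pow_pos hN_pos 2) ?_ hs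
  filter_upwards [eventually_ge_atTop (N + 1)] with n hn
  gcongr
  exact hge n hn

namespace IsJacobiSolution

theorem summable_mul_norm_sub_sq (h : IsJacobiSolution b q w) (hb : ∀ n, 0 ≤ b n)
    (hρ : ∀ n, 0 ≤ ρ n) (hdiv : ¬ Summable ρ)
    (hC : ∀ n, b (n + 1) + b n - (q (n + 1)).re ≤ C * ρ (n + 1))
    (hs : Summable fun n => ‖w n‖ ^ 2 * ρ n) :
    Summable fun n => b n * ‖w (n + 1) - w n‖ ^ 2 := by
  have herr : Summable fun n => C * (‖w (n + 1)‖ ^ 2 * ρ (n + 1)) :=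
    ((summable_nat_add_iff 1).2 hs).mul_left C
  refine summable_of_le_sub_add (fun n => mul_nonneg (hb n) (sq_nonneg _)) (fun n => ?_) herr
    (frequently_jacobiEnergy_nonpos hb hρ hdiv hs)
  linarith [h.energy_add_one_sub_energy n,
    mul_le_mul_of_nonneg_right (hC n) (sq_nonneg ‖w (n + 1)‖)]

theorem summable_abs_flux_mul (h : IsJacobiSolution b q w) (hb : ∀ n, 0 ≤ b n)
    (hρ : ∀ n, 0 ≤ ρ n) (hdiv : ¬ Summable ρ) (hB : ∀ n, b n * ρ n ≤ B)
    (hC : ∀ n, b (n + 1) + b n - (q (n + 1)).re ≤ C * ρ (n + 1))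
    (hs : Summable fun n => ‖w n‖ ^ 2 * ρ n) :
    Summable fun n => |jacobiFlux b w n| * ρ n :=
  .of_nonneg_of_le (fun n => mul_nonneg (abs_nonneg _) (hρ n))
    (fun n => abs_jacobiFlux_mul_le (hb n) (hρ n) (hB n))
    ((h.summable_mul_norm_sub_sq hb hρ hdiv hC hs).add (hs.mul_left B))

theorem flux_nonpos (h : IsJacobiSolution b q w) (hb : ∀ n, 0 ≤ b n)
    (hρ : ∀ n, 0 ≤ ρ n) (hdiv : ¬ Summable ρ) (hB : ∀ n, b n * ρ n ≤ B)
    (hC : ∀ n, b (n + 1) + b n - (q (n + 1)).re ≤ C * ρ (n + 1))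
    (hq : ∀ n, 0 ≤ (q (n + 1)).im) (hs : Summable fun n => ‖w n‖ ^ 2 * ρ n) (n : ℕ) :
    jacobiFlux b w n ≤ 0 := by
  have hmono : Monotone (jacobiFlux b w) :=
    monotone_nat_of_le_succ fun k => h.flux_le_flux_add_one (hq k)
  exact nonpos_of_monotone_of_summable_mul hmono hρ hdiv
    (h.summable_abs_flux_mul hb hρ hdiv hB hC hs) n

end IsJacobiSolution

end HalfLine

section WholeLine

variable {b ρ : ℤ → ℝ} {q w : ℤ → ℂ} {B C : ℝ}

theorem jacobiFlux_reflect (n : ℤ) :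
    jacobiFlux (fun k => b (-k - 1)) (fun k => w (-k)) n = -jacobiFlux b w (-n - 1) := by
  simp only [jacobiFlux, neg_add', sub_add_cancel, mul_im, conj_re, conj_im]
  ring

namespace IsJacobiSolution

theorem comp_natCast (h : IsJacobiSolution b q w) :
    IsJacobiSolution (fun n : ℕ => b n) (fun n : ℕ => q n) (fun n : ℕ => w n) := fun n => by
  simpa using h n

theorem reflect (h : IsJacobiSolution b q w) :
    IsJacobiSolution (fun n => b (-n - 1)) (fun n => q (-n)) (fun n => w (-n)) := fun n => by
  have hn := h (-n - 1 - 1)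
  simp only [sub_add_cancel] at hn
  simp only [neg_add']
  linear_combination hn

theorem flux_nonpos_natCast (h : IsJacobiSolution b q w) (hb : ∀ n, 0 ≤ b n)
    (hρ : ∀ n, 0 ≤ ρ n) (hdiv : ¬ Summable fun n : ℕ => ρ n)
    (hB : ∀ n, (b n + b (n - 1)) * ρ n ≤ B) (hC : ∀ n, b n + b (n - 1) - (q n).re ≤ C * ρ n)
    (hq : ∀ n, 0 ≤ (q n).im) (hs : Summable fun n => ‖w n‖ ^ 2 * ρ n) (n : ℕ) :
    jacobiFlux b w n ≤ 0 := by
  have hB' (k : ℕ) : b k * ρ k ≤ B :=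
    (mul_le_mul_of_nonneg_right (le_add_of_nonneg_right (hb _)) (hρ _)).trans (hB k)
  have hC' (k : ℕ) : b (k + 1 : ℕ) + b k - (q (k + 1 : ℕ)).re ≤ C * ρ (k + 1 : ℕ) := by
    simpa using hC (k + 1 : ℕ)
  have hflux := h.comp_natCast.flux_nonpos (fun k => hb k) (fun k => hρ k) hdiv hB' hC'
    (fun k => hq (k + 1 : ℕ)) (hs.comp_injective Nat.cast_injective) n
  simpa [jacobiFlux] using hflux

theorem flux_eq_zero (h : IsJacobiSolution b q w) (hb : ∀ n, 0 ≤ b n) (hρ : ∀ n, 0 ≤ ρ n)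
    (hdiv : ¬ Summable fun n : ℕ => ρ n) (hdiv' : ¬ Summable fun n : ℕ => ρ (-n))
    (hB : ∀ n, (b n + b (n - 1)) * ρ n ≤ B) (hC : ∀ n, b n + b (n - 1) - (q n).re ≤ C * ρ n)
    (hq : ∀ n, 0 ≤ (q n).im) (hs : Summable fun n => ‖w n‖ ^ 2 * ρ n) (n : ℤ) :
    jacobiFlux b w n = 0 := by
  have hmono : Monotone (jacobiFlux b w) :=
    monotone_int_of_le_succ fun k => h.flux_le_flux_add_one (hq (k + 1))
  have hright (k : ℕ) : jacobiFlux b w k ≤ 0 := h.flux_nonpos_natCast hb hρ hdiv hB hC hq hs k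
  have hleft (k : ℕ) : 0 ≤ jacobiFlux b w (-k - 1) := by
    have hflux := h.reflect.flux_nonpos_natCast (ρ := fun i => ρ (-i)) (B := B) (C := C)
      (fun i => hb _) (fun i => hρ _) hdiv' (fun i => ?_) (fun i => ?_) (fun i => hq _)
      (hs.comp_injective neg_injective) k
    · rwa [jacobiFlux_reflect, neg_nonpos] at hflux
    · simpa [add_comm] using hB (-i)
    · simpa [add_comm] using hC (-i)
  exact le_antisymm ((hmono (by lia)).trans (hright n.natAbs))
    ((hleft n.natAbs).trans (hmono (by lia)))

theorem eq_zero_of_im_pos (h : IsJacobiSolution b q w) (hb : ∀ n, 0 ≤ b n) (hρ : ∀ n, 0 ≤ ρ n)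
    (hdiv : ¬ Summable fun n : ℕ => ρ n) (hdiv' : ¬ Summable fun n : ℕ => ρ (-n))
    (hB : ∀ n, (b n + b (n - 1)) * ρ n ≤ B) (hC : ∀ n, b n + b (n - 1) - (q n).re ≤ C * ρ n)
    (hq : ∀ n, 0 < (q n).im) (hs : Summable fun n => ‖w n‖ ^ 2 * ρ n) (n : ℤ) : w n = 0 := by
  have hflux := h.flux_eq_zero hb hρ hdiv hdiv' hB hC (fun k => (hq k).le) hs
  have hprod := h.flux_add_one_sub_flux (n - 1)
  rw [hflux, hflux, sub_zero, sub_add_cancel, eq_comm, mul_eq_zero] at hprod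
  simpa [(hq n).ne'] using hprod

theorem eq_zero (h : IsJacobiSolution b q w) (hb : ∀ n, 0 ≤ b n) (hρ : ∀ n, 0 ≤ ρ n)
    (hdiv : ¬ Summable fun n : ℕ => ρ n) (hdiv' : ¬ Summable fun n : ℕ => ρ (-n))
    (hB : ∀ n, (b n + b (n - 1)) * ρ n ≤ B) (hC : ∀ n, b n + b (n - 1) - (q n).re ≤ C * ρ n)
    (hq : (∀ n, 0 < (q n).im) ∨ ∀ n, (q n).im < 0) (hs : Summable fun n => ‖w n‖ ^ 2 * ρ n)
    (n : ℤ) : w n = 0 := by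
  rcases hq with hpos | hneg
  · exact h.eq_zero_of_im_pos hb hρ hdiv hdiv' hB hC hpos hs n
  · have hconj := h.conj_comp.eq_zero_of_im_pos hb hρ hdiv hdiv' hB (by simpa using hC)
      (by simpa using hneg) (by simpa using hs) n
    simpa using hconj

end IsJacobiSolution

end WholeLine

section SquareRoot

theorem re_cpow_half (z : ℂ) : (z ^ ((1 : ℂ) / 2)).re = √((‖z‖ + z.re) / 2) := by
  rw [one_div, cpow_inv_two_re]

theorem re_le_re_cpow_half_sq (z : ℂ) : z.re ≤ (z ^ ((1 : ℂ) / 2)).re ^ 2 := by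
  have hz := abs_le.1 (abs_re_le_norm z)
  rw [re_cpow_half, Real.sq_sqrt (by linarith)]
  linarith

theorem im_cpow_half_pos {z : ℂ} (hz : 0 < z.im) : 0 < (z ^ ((1 : ℂ) / 2)).im := by
  have hre : z.re < ‖z‖ := (le_abs_self _).trans_lt (abs_re_lt_norm.2 hz.ne')
  rw [one_div, cpow_inv_two_im_eq_sqrt hz.le]
  exact Real.sqrt_pos.2 (by linarith)

theorem im_cpow_half_neg {z : ℂ} (hz : z.im < 0) : (z ^ ((1 : ℂ) / 2)).im < 0 := by
  have hre : z.re < ‖z‖ := (le_abs_self _).trans_lt (abs_re_lt_norm.2 hz.ne)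
  rw [one_div, cpow_inv_two_im_eq_neg_sqrt hz]
  exact neg_lt_zero.2 (Real.sqrt_pos.2 (by linarith))

theorem sub_le_div_of_sq_le_sq_add {s r c : ℝ} (hs : 0 < s) (hr : 0 ≤ r) (hc : 0 ≤ c)
    (h : s ^ 2 ≤ r ^ 2 + c) : s - r ≤ c / s := by
  rw [le_div_iff₀ hs]
  rcases le_total s r with hsr | hrs
  · exact (mul_nonpos_of_nonpos_of_nonneg (sub_nonpos.2 hsr) hs.le).trans hc
  · nlinarith [mul_nonneg hr (sub_nonneg.2 hrs)]

theorem sqrt_sub_re_cpow_half_le (x : ℝ) (Λ : ℂ) :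
    √(x ^ 2 + 1) - (((x : ℂ) ^ 2 - Λ) ^ ((1 : ℂ) / 2)).re ≤ (1 + ‖Λ‖) / √(x ^ 2 + 1) := by
  refine sub_le_div_of_sq_le_sq_add (by positivity) (re_cpow_half _ ▸ Real.sqrt_nonneg _)
    (by positivity) ?_
  have hre := re_le_re_cpow_half_sq ((x : ℂ) ^ 2 - Λ)
  have hsq : ((x : ℂ) ^ 2).re = x ^ 2 := by rw [← ofReal_pow, ofReal_re]
  rw [sub_re, hsq] at hre
  rw [Real.sq_sqrt (by positivity)]
  linarith [re_le_norm Λ]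

end SquareRoot

section Recurrence

/-- The diagonal coefficient `(2/α) √(n² - Λ)` of the recurrence (1.eq). -/
noncomputable def recDiag (α : ℝ) (Λ : ℂ) (n : ℤ) : ℂ :=
  2 / (α : ℂ) * ((n : ℂ) ^ 2 - Λ) ^ ((1 : ℂ) / 2)

/-- The off-diagonal coefficient of the recurrence (1.eq) after its signs have been gauged away:
`|n + 1/2|` in place of `n + 1/2`. -/
noncomputable def recOffDiag (n : ℤ) : ℝ :=
  |(n : ℝ) + 1 / 2|

variable {α : ℝ} {Λ : ℂ}

theorem recDiag_eq_ofReal_mul (n : ℤ) :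
    recDiag α Λ n = (2 / α : ℝ) * (((n : ℝ) : ℂ) ^ 2 - Λ) ^ ((1 : ℂ) / 2) := by
  simp [recDiag]

theorem im_recDiag_pos_or_neg (hα : 0 < α) (hΛ : Λ.im ≠ 0) :
    (∀ n, 0 < (recDiag α Λ n).im) ∨ ∀ n, (recDiag α Λ n).im < 0 := by
  have him (n : ℤ) : (((n : ℝ) : ℂ) ^ 2 - Λ).im = -Λ.im := by
    rw [sub_im, ← ofReal_pow, ofReal_im, zero_sub]
  simp only [recDiag_eq_ofReal_mul, im_ofReal_mul]
  rcases hΛ.lt_or_gt with hneg | hpos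
  · exact .inl fun n => mul_pos (by positivity) (im_cpow_half_pos (by rw [him]; linarith))
  · exact .inr fun n =>
      mul_neg_of_pos_of_neg (by positivity) (im_cpow_half_neg (by rw [him]; linarith))

theorem recOffDiag_add_recOffDiag_sub_one_le (n : ℤ) :
    recOffDiag n + recOffDiag (n - 1) ≤ 2 * √((n : ℝ) ^ 2 + 1) := by
  have habs : |(n : ℝ)| ≤ √((n : ℝ) ^ 2 + 1) := Real.abs_le_sqrt (by linarith)
  have hone : 1 ≤ √((n : ℝ) ^ 2 + 1) := Real.one_le_sqrt.2 (by nlinarith)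
  simp only [recOffDiag, Int.cast_sub, Int.cast_one]
  grind

theorem recOffDiag_add_recOffDiag_sub_one_sub_re_recDiag_le (hα : 0 < α) (hα1 : α ≤ 1) (n : ℤ) :
    recOffDiag n + recOffDiag (n - 1) - (recDiag α Λ n).re
      ≤ 2 * (1 + ‖Λ‖) * (√((n : ℝ) ^ 2 + 1))⁻¹ := by
  have hsqrt := sqrt_sub_re_cpow_half_le n Λ
  rw [recDiag_eq_ofReal_mul, re_ofReal_mul]
  set r := ((((n : ℝ) : ℂ) ^ 2 - Λ) ^ ((1 : ℂ) / 2)).re with hr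
  have hr_nonneg : 0 ≤ r := by rw [hr, re_cpow_half]; positivity
  have htwo : 2 ≤ 2 / α := (le_div_iff₀ hα).2 (by linarith)
  rw [div_eq_mul_inv] at hsqrt
  linarith [recOffDiag_add_recOffDiag_sub_one_le n, mul_le_mul_of_nonneg_right htwo hr_nonneg]

theorem not_summable_inv_sqrt_sq_add_one :
    ¬ Summable fun n : ℕ => (√((n : ℝ) ^ 2 + 1))⁻¹ := fun hs => by
  refine Real.not_summable_one_div_natCast ((summable_nat_add_iff 1).1 (hs.of_nonneg_of_le
    (fun n => by positivity) fun n => ?_))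
  rw [one_div, Nat.cast_add_one]
  gcongr
  exact Real.sqrt_le_iff.2 ⟨by positivity, by nlinarith [n.cast_nonneg (α := ℝ)]⟩

theorem IsRecSolution.isJacobiSolution {w : ℤ → ℂ} (hw : IsRecSolution α Λ w) :
    IsJacobiSolution (fun n : ℤ => (n : ℝ) + 1 / 2) (recDiag α Λ) w := fun n => by
  have hn := hw (n + 1)
  rw [add_sub_cancel_right] at hn
  push_cast [recDiag] at hn ⊢
  linear_combination hn

/-- The gauge `ε_n = 1` for `n ≥ 0` and `ε_n = (-1)^n` for `n < 0`, chosen so that `ε_n ε_{n+1}` is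
the sign of the coefficient `n + 1/2`. -/
noncomputable def gaugeSign (n : ℤ) : ℝ :=
  if 0 ≤ n then 1 else (-1) ^ n

theorem gaugeSign_sq (n : ℤ) : gaugeSign n ^ 2 = 1 := by
  unfold gaugeSign
  split_ifs
  · exact one_pow 2
  · rw [← zpow_natCast, zpow_comm]
    simp

theorem abs_gaugeSign (n : ℤ) : |gaugeSign n| = 1 :=
  (pow_eq_one_iff_of_nonneg (abs_nonneg _) two_ne_zero).1 (by rw [sq_abs, gaugeSign_sq])

theorem gaugeSign_mul_gaugeSign_add_one_mul (n : ℤ) :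
    gaugeSign n * gaugeSign (n + 1) * ((n : ℝ) + 1 / 2) = recOffDiag n := by
  rw [recOffDiag]
  rcases le_or_gt 0 n with hn | hn
  · have hpos : (0 : ℝ) ≤ n + 1 / 2 := by positivity
    rw [gaugeSign, gaugeSign, if_pos hn, if_pos (by lia), abs_of_nonneg hpos, one_mul, one_mul]
  · have hn_le : (n : ℝ) ≤ -1 := mod_cast Int.le_sub_one_of_lt hn
    have hsucc : gaugeSign (n + 1) = (-1) ^ (n + 1) := by
      rw [gaugeSign]
      split_ifs with h
      · rw [show n + 1 = 0 by lia, zpow_zero]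
      · rfl
    have hsign : gaugeSign n * gaugeSign (n + 1) = -1 := by
      rw [hsucc, zpow_add_one₀ (by norm_num), gaugeSign, if_neg (not_le.2 hn), ← mul_assoc,
        ← mul_zpow]
      simp
    rw [hsign, abs_of_neg (by linarith), neg_one_mul]

theorem IsRecSolution.isJacobiSolution_gaugeSign_mul {w : ℤ → ℂ} (hw : IsRecSolution α Λ w) :
    IsJacobiSolution recOffDiag (recDiag α Λ) (fun n => gaugeSign n * w n) := by
  simpa only [gaugeSign_mul_gaugeSign_add_one_mul] using hw.isJacobiSolution.gauge gaugeSign_sq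

end Recurrence

/-- Core of Theorem 3.3(1): for `0 < α ≤ 1` and nonreal `Λ`, any solution of the
recurrence (1.eq) satisfying `∑_{n∈ℤ} |w_n|² (n²+1)^{-1/2} < ∞` vanishes identically. -/
theorem rec_solution_trivial_of_alpha_le_one (α : ℝ) (hα : 0 < α) (hα1 : α ≤ 1)
    (Λ : ℂ) (hΛ : Λ.im ≠ 0) (w : ℤ → ℂ) (hw : IsRecSolution α Λ w)
    (hsum : Summable fun n : ℤ => ‖w n‖ ^ 2 * ((n : ℝ) ^ 2 + 1) ^ (-(1 / 2 : ℝ))) :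
    ∀ n : ℤ, w n = 0 := by
  intro n
  have hweight (k : ℤ) : ((k : ℝ) ^ 2 + 1) ^ (-(1 / 2 : ℝ)) = (√((k : ℝ) ^ 2 + 1))⁻¹ := by
    rw [Real.rpow_neg (by positivity), Real.sqrt_eq_rpow]
  simp only [hweight] at hsum
  have hgauged : (gaugeSign n * w n : ℂ) = 0 :=
    hw.isJacobiSolution_gaugeSign_mul.eq_zero (ρ := fun k => (√((k : ℝ) ^ 2 + 1))⁻¹)
      (hb := fun k => abs_nonneg _)
      (hρ := fun k => by positivity)
      (hdiv := by simpa using not_summable_inv_sqrt_sq_add_one)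
      (hdiv' := by simpa using not_summable_inv_sqrt_sq_add_one)
      (hB := fun k => (mul_inv_le_iff₀ (by positivity)).2 (recOffDiag_add_recOffDiag_sub_one_le k))
      (hC := recOffDiag_add_recOffDiag_sub_one_sub_re_recDiag_le hα hα1)
      (hq := im_recDiag_pos_or_neg hα hΛ)
      (hs := by simpa [abs_gaugeSign] using hsum) n
  have hsign : gaugeSign n ≠ 0 := abs_ne_zero.1 (by simp [abs_gaugeSign])
  simpa [hsign] using hgauged
end

section
/- Let α > 1 and let Λ ∈ ℂ with Im Λ ≠ 0. Then every solution w : ℤ → ℂ of the recurrence (1.eq) satisfies ∑_{n∈ℤ} |w_n|² (n²+1)^{−1/2} < ∞. Consequently, the complex vector space of solutions of (1.eq) satisfying this summability condition has dimension exactly 2. -/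
open Complex

/-! A solution of (1.eq) is fixed by `(w 0, w 1)`, so all that matters is summability. With
`c = 1 / α` and `√(n² - Λ) = n + O(1/n)`, the recurrence for `n ≥ 1` is an `O(1/n)` perturbation of
`(n + 1/2) uₙ₊₁ - 2 c n uₙ + (n - 1/2) uₙ₋₁ = 0`. The quadratic form
`Eₙ = (n + 1/2) ‖uₙ₊₁‖² + (n - 1/2) ‖uₙ‖² - 2 c n ⟪uₙ₊₁, uₙ⟫` is comparable to
`n (‖uₙ₊₁‖² + ‖uₙ‖²)` because `|c| < 1`, and the recurrence gives `Eₙ₊₁ ≤ (1 + O(1/n²)) Eₙ`.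
So `Eₙ` stays bounded, `‖uₙ‖² = O(1/n)`, and the weighted terms are `O(1/n²)`. The reflection
`n ↦ -n` turns `α` into `-α` and transfers this to `-∞`. -/

open Filter Asymptotics
open scoped RealInnerProductSpace

section SolutionSpace

lemma exists_int_orbit {X : Type*} (T : ℤ → X ≃ X) (x₀ : X) :
    ∃ x : ℤ → X, x 0 = x₀ ∧ ∀ n, x (n + 1) = T n (x n) := by
  refine ⟨fun n ↦ n.inductionOn' 0 x₀ (fun k _ ↦ T k) (fun k _ ↦ (T (k - 1)).symm),
    Int.inductionOn'_self, fun n ↦ ?_⟩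
  rcases le_or_gt 0 n with hn | hn
  · exact Int.inductionOn'_add_one hn
  · have backward := Int.inductionOn'_sub_one (z := n + 1) (b := 0) (zero := x₀)
      (succ := fun k _ ↦ T k) (pred := fun k _ ↦ (T (k - 1)).symm) (by lia)
    rw [Equiv.eq_symm_apply] at backward
    simpa only [add_sub_cancel_right] using backward.symm

variable {𝕜 : Type*} [Field 𝕜]

lemma intCast_add_half_ne_zero [CharZero 𝕜] (n : ℤ) : (n : 𝕜) + 1 / 2 ≠ 0 := by
  intro h
  have odd_eq_zero : (2 * n + 1 : 𝕜) = 0 := by linear_combination 2 * h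
  norm_cast at odd_eq_zero
  lia

lemma intCast_sub_half_ne_zero [CharZero 𝕜] (n : ℤ) : (n : 𝕜) - 1 / 2 ≠ 0 := by
  convert intCast_add_half_ne_zero (𝕜 := 𝕜) (n - 1) using 1
  push_cast
  ring

/-- One step `(wₙ₋₁, wₙ) ↦ (wₙ, wₙ₊₁)` of the recurrence `a wₙ₊₁ - b wₙ + c wₙ₋₁ = 0`, as a
bijection of the plane of consecutive values. -/
def transferEquiv (a b c : 𝕜) (ha : a ≠ 0) (hc : c ≠ 0) : 𝕜 × 𝕜 ≃ 𝕜 × 𝕜 where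
  toFun v := (v.2, (b * v.2 - c * v.1) / a)
  invFun v := ((b * v.1 - a * v.2) / c, v.1)
  left_inv v := by ext <;> simp [mul_div_cancel₀, ha, hc]
  right_inv v := by ext <;> simp [mul_div_cancel₀, ha, hc]

/-- The space of bi-infinite solutions of the three-term recurrence
`a n * w (n + 1) - b n * w n + c n * w (n - 1) = 0`; the minus sign matches (1.eq). -/
def threeTermSolutions (a b c : ℤ → 𝕜) : Submodule 𝕜 (ℤ → 𝕜) where
  carrier := {w | ∀ n, a n * w (n + 1) - b n * w n + c n * w (n - 1) = 0}
  zero_mem' n := by simp only [Pi.zero_apply, mul_zero, sub_zero, add_zero]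
  add_mem' {v w} hv hw n := by
    simp only [Pi.add_apply]
    linear_combination hv n + hw n
  smul_mem' r w hw n := by
    simp only [Pi.smul_apply, smul_eq_mul]
    linear_combination r * hw n

variable {a b c : ℤ → 𝕜}

namespace threeTermSolutions

lemma exists_initial_values (ha : ∀ n, a n ≠ 0) (hc : ∀ n, c n ≠ 0) (p q : 𝕜) :
    ∃ w ∈ threeTermSolutions a b c, w 0 = p ∧ w 1 = q := by
  obtain ⟨v, hv₀, hv⟩ := exists_int_orbit
    (fun n ↦ transferEquiv (a (n + 1)) (b (n + 1)) (c (n + 1)) (ha _) (hc _)) (p, q)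
  have fst_succ (n : ℤ) : (v (n + 1)).1 = (v n).2 := by rw [hv]; rfl
  refine ⟨fun n ↦ (v n).1, fun n ↦ ?_, congrArg Prod.fst hv₀,
    (fst_succ 0).trans (congrArg Prod.snd hv₀)⟩
  obtain ⟨m, rfl⟩ : ∃ m, n = m + 1 := ⟨n - 1, by ring⟩
  have snd_succ : a (m + 1) * (v (m + 1)).2 = b (m + 1) * (v m).2 - c (m + 1) * (v m).1 := by
    rw [hv]
    exact mul_div_cancel₀ _ (ha _)
  simp only [fst_succ, snd_succ, add_sub_cancel_right]
  ring

lemma eq_zero_of_initial_values (ha : ∀ n, a n ≠ 0) (hc : ∀ n, c n ≠ 0) {w : ℤ → 𝕜}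
    (hw : w ∈ threeTermSolutions a b c) (h₀ : w 0 = 0) (h₁ : w 1 = 0) : w = 0 := by
  have consecutive_zeros (n : ℤ) : w n = 0 ∧ w (n + 1) = 0 := by
    induction n with
    | zero => exact ⟨h₀, by rwa [zero_add]⟩
    | succ n ih =>
      have h := hw (n + 1)
      rw [add_sub_cancel_right, ih.1, ih.2, mul_zero, mul_zero, sub_zero, add_zero] at h
      exact ⟨ih.2, (mul_eq_zero.mp h).resolve_left (ha _)⟩
    | pred n ih =>
      have h := hw (-n)
      rw [ih.1, ih.2, mul_zero, mul_zero, sub_zero, zero_add] at h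
      exact ⟨(mul_eq_zero.mp h).resolve_left (hc _), by rw [sub_add_cancel]; exact ih.1⟩
  exact funext fun n ↦ (consecutive_zeros n).1

lemma exists_linearIndependent_pair (ha : ∀ n, a n ≠ 0) (hc : ∀ n, c n ≠ 0) :
    ∃ w₁ ∈ threeTermSolutions a b c, ∃ w₂ ∈ threeTermSolutions a b c,
      LinearIndependent 𝕜 ![w₁, w₂] ∧
        ∀ w ∈ threeTermSolutions a b c, ∃ p q : 𝕜, w = p • w₁ + q • w₂ := by
  obtain ⟨w₁, hw₁, h₁₀, h₁₁⟩ := exists_initial_values (b := b) ha hc 1 0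
  obtain ⟨w₂, hw₂, h₂₀, h₂₁⟩ := exists_initial_values (b := b) ha hc 0 1
  refine ⟨w₁, hw₁, w₂, hw₂, LinearIndependent.pair_iff.mpr fun p q h ↦ ⟨?_, ?_⟩,
    fun w hw ↦ ⟨w 0, w 1, sub_eq_zero.mp ?_⟩⟩
  · simpa [h₁₀, h₂₀] using congrFun h 0
  · simpa [h₁₁, h₂₁] using congrFun h 1
  · have hcomb := add_mem (Submodule.smul_mem _ (w 0) hw₁) (Submodule.smul_mem _ (w 1) hw₂)
    exact eq_zero_of_initial_values ha hc (sub_mem hw hcomb) (by simp [h₁₀, h₂₀])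
      (by simp [h₁₁, h₂₁])

end threeTermSolutions

end SolutionSpace

lemma isBigO_one_of_le_one_add_mul {E δ : ℕ → ℝ} (hδ : Summable δ) (hδ₀ : ∀ n, 0 ≤ δ n)
    (hE₀ : ∀ᶠ n in atTop, 0 ≤ E n) (hE : ∀ᶠ n in atTop, E (n + 1) ≤ (1 + δ n) * E n) :
    E =O[atTop] fun _ ↦ (1 : ℝ) := by
  obtain ⟨N, hN⟩ := eventually_atTop.mp (hE₀.and hE)
  refine IsBigO.of_bound (E N * Real.exp (∑' n, δ n)) ?_
  filter_upwards [eventually_ge_atTop N] with n hn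
  have growth : E n ≤ E N * Real.exp (∑ i ∈ Finset.Ico N n, δ i) := by
    simpa using discrete_gronwall (b := 0) (hN N le_rfl).1
      (fun k hk ↦ by simpa using (hN k hk).2) (fun k _ ↦ hδ₀ k) (fun _ _ ↦ le_rfl) hn
  rw [Real.norm_of_nonneg (hN n hn).1, norm_one, mul_one]
  refine growth.trans (mul_le_mul_of_nonneg_left ?_ (hN N le_rfl).1)
  exact Real.exp_le_exp.mpr (hδ.sum_le_tsum _ fun k _ ↦ hδ₀ k)

section Energy

variable {V : Type*} [NormedAddCommGroup V] [InnerProductSpace ℝ V]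

lemma abs_real_inner_le_half_add_sq (x y : V) : |⟪x, y⟫| ≤ (‖x‖ ^ 2 + ‖y‖ ^ 2) / 2 := by
  linarith [abs_real_inner_le_norm x y, two_mul_le_add_sq ‖x‖ ‖y‖]

/-- The error with which `u` satisfies the unperturbed recurrence
`(m + 1/2) uₘ₊₁ - 2 c m uₘ + (m - 1/2) uₘ₋₁ = 0` at `m = n + 1`. -/
noncomputable def recurrenceDefect (c : ℝ) (u : ℕ → V) (n : ℕ) : V :=
  (n + 3 / 2 : ℝ) • u (n + 2) - (2 * c * (n + 1)) • u (n + 1) + (n + 1 / 2 : ℝ) • u n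

/-- The quadratic form in `(uₙ, uₙ₊₁)` which the unperturbed recurrence preserves to leading order
in `n`; it controls the growth of solutions. -/
noncomputable def recurrenceEnergy (c : ℝ) (u : ℕ → V) (n : ℕ) : ℝ :=
  (n + 1 / 2) * ‖u (n + 1)‖ ^ 2 + (n - 1 / 2) * ‖u n‖ ^ 2 - 2 * c * n * ⟪u (n + 1), u n⟫

variable (c : ℝ) (u : ℕ → V) (n : ℕ)

lemma mul_le_recurrenceEnergy :
    ((1 - |c|) * n - 1 / 2) * (‖u (n + 1)‖ ^ 2 + ‖u n‖ ^ 2) ≤ recurrenceEnergy c u n := by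
  have cross : 2 * (c * ⟪u (n + 1), u n⟫) ≤ |c| * (‖u (n + 1)‖ ^ 2 + ‖u n‖ ^ 2) :=
    calc 2 * (c * ⟪u (n + 1), u n⟫) ≤ 2 * (|c| * |⟪u (n + 1), u n⟫|) := by
          rw [← abs_mul]; gcongr; exact le_abs_self _
      _ ≤ 2 * (|c| * ((‖u (n + 1)‖ ^ 2 + ‖u n‖ ^ 2) / 2)) := by
          gcongr; exact abs_real_inner_le_half_add_sq _ _
      _ = |c| * (‖u (n + 1)‖ ^ 2 + ‖u n‖ ^ 2) := by ring
  have scaled_cross := mul_le_mul_of_nonneg_left cross n.cast_nonneg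
  have sq_nonneg_succ := sq_nonneg ‖u (n + 1)‖
  rw [recurrenceEnergy]
  linarith

lemma mul_recurrenceEnergy_succ_sub :
    (n + 3 / 2) * (recurrenceEnergy c u (n + 1) - recurrenceEnergy c u n) =
      ‖u n‖ ^ 2 - c * ⟪u (n + 1), u n⟫ + ‖recurrenceDefect c u n‖ ^ 2
        + 2 * c * (n + 1) * ⟪recurrenceDefect c u n, u (n + 1)⟫
        - (2 * n + 1) * ⟪recurrenceDefect c u n, u n⟫ := by
  rw [recurrenceEnergy, recurrenceEnergy, recurrenceDefect]
  simp only [← real_inner_self_eq_norm_sq, inner_add_left, inner_add_right, inner_sub_left,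
    inner_sub_right, real_inner_smul_left, real_inner_smul_right, real_inner_comm (u n),
    real_inner_comm (u (n + 1)) (u (n + 2))]
  push_cast
  ring

variable {c u n}

lemma mul_recurrenceEnergy_succ_sub_le {K : ℝ} (hc : |c| ≤ 1) (hK : 0 ≤ K)
    (h : (n + 1) * ‖recurrenceDefect c u n‖ ≤ K * ‖u (n + 1)‖) :
    (n + 3 / 2) * (recurrenceEnergy c u (n + 1) - recurrenceEnergy c u n) ≤
      (K + 1) * (K + 2) * (‖u (n + 1)‖ ^ 2 + ‖u n‖ ^ 2) := by
  rw [mul_recurrenceEnergy_succ_sub]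
  set e := recurrenceDefect c u n
  set y := u (n + 1)
  set z := u n
  have abs_mul_le (r : ℝ) : |c * r| ≤ |r| := by
    rw [abs_mul]
    exact mul_le_of_le_one_left (abs_nonneg r) hc
  have coupling : -(c * ⟪y, z⟫) ≤ (‖y‖ ^ 2 + ‖z‖ ^ 2) / 2 :=
    (neg_le_abs _).trans ((abs_mul_le _).trans (abs_real_inner_le_half_add_sq y z))
  have defect_sq : ‖e‖ ^ 2 ≤ K ^ 2 * ‖y‖ ^ 2 := by
    rw [← mul_pow]
    gcongr
    exact (le_mul_of_one_le_left (norm_nonneg e) (le_add_of_nonneg_left n.cast_nonneg)).trans h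
  have inner_defect (x : V) : (n + 1) * |⟪e, x⟫| ≤ K * ‖y‖ * ‖x‖ :=
    calc (n + 1) * |⟪e, x⟫| ≤ (n + 1) * (‖e‖ * ‖x‖) := by
          gcongr; exact abs_real_inner_le_norm e x
      _ = (n + 1) * ‖e‖ * ‖x‖ := by ring
      _ ≤ K * ‖y‖ * ‖x‖ := by gcongr
  have defect_succ : 2 * c * (n + 1) * ⟪e, y⟫ ≤ 2 * K * ‖y‖ ^ 2 :=
    calc 2 * c * (n + 1) * ⟪e, y⟫ = 2 * (n + 1) * (c * ⟪e, y⟫) := by ring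
      _ ≤ 2 * (n + 1) * |⟪e, y⟫| := by gcongr; exact (le_abs_self _).trans (abs_mul_le _)
      _ ≤ 2 * K * ‖y‖ ^ 2 := by linarith [inner_defect y]
  have defect_self : -((2 * n + 1) * ⟪e, z⟫) ≤ K * (‖y‖ ^ 2 + ‖z‖ ^ 2) :=
    calc -((2 * n + 1) * ⟪e, z⟫) = (2 * n + 1) * -⟪e, z⟫ := by ring
      _ ≤ (2 * n + 1) * |⟪e, z⟫| := by gcongr; exact neg_le_abs _
      _ ≤ 2 * (n + 1) * |⟪e, z⟫| := by gcongr ?_ * _; linarith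
      _ ≤ K * (2 * ‖y‖ * ‖z‖) := by linarith [inner_defect z]
      _ ≤ K * (‖y‖ ^ 2 + ‖z‖ ^ 2) := by gcongr; exact two_mul_le_add_sq _ _
  have spare : 0 ≤ 3 / 2 * ‖y‖ ^ 2 + (K ^ 2 + 2 * K + 1 / 2) * ‖z‖ ^ 2 := by positivity
  linarith

lemma exists_eventually_mul_le_recurrenceEnergy (hc : |c| < 1) (u : ℕ → V) :
    ∃ κ > 0, ∀ᶠ n : ℕ in atTop,
      κ * n * (‖u (n + 1)‖ ^ 2 + ‖u n‖ ^ 2) ≤ recurrenceEnergy c u n := by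
  have gap_pos : 0 < 1 - |c| := sub_pos.mpr hc
  refine ⟨(1 - |c|) / 2, half_pos gap_pos, ?_⟩
  filter_upwards [tendsto_natCast_atTop_atTop.eventually_ge_atTop (1 / (1 - |c|))] with n hn
  rw [div_le_iff₀ gap_pos] at hn
  refine le_trans ?_ (mul_le_recurrenceEnergy c u n)
  gcongr
  linarith

lemma recurrenceEnergy_isBigO_one (hc : |c| < 1)
    (h : (fun n : ℕ ↦ (n + 1) * ‖recurrenceDefect c u n‖) =O[atTop] fun n ↦ ‖u (n + 1)‖) :
    recurrenceEnergy c u =O[atTop] fun _ ↦ (1 : ℝ) := by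
  obtain ⟨K, hK, hKbound⟩ := h.exists_nonneg
  obtain ⟨κ, hκ, coercive⟩ := exists_eventually_mul_le_recurrenceEnergy hc u
  set D := (K + 1) * (K + 2) / κ with hD
  have summable_increments : Summable fun n : ℕ ↦ D * (1 / (n : ℝ) ^ 2) :=
    (Real.summable_one_div_nat_pow.mpr one_lt_two).mul_left D
  refine isBigO_one_of_le_one_add_mul summable_increments (fun n ↦ by positivity) ?_ ?_
  · filter_upwards [coercive] with n hn using le_trans (by positivity) hn
  · filter_upwards [coercive, hKbound.bound, eventually_gt_atTop 0] with n hn hdefect hn₀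
    replace hn₀ : (0 : ℝ) < n := mod_cast hn₀
    set S := ‖u (n + 1)‖ ^ 2 + ‖u n‖ ^ 2
    have defect_le : (n + 1) * ‖recurrenceDefect c u n‖ ≤ K * ‖u (n + 1)‖ := by
      rwa [norm_norm, Real.norm_of_nonneg (by positivity)] at hdefect
    have increment : recurrenceEnergy c u (n + 1) - recurrenceEnergy c u n ≤
        D * (1 / (n : ℝ) ^ 2) * recurrenceEnergy c u n :=
      calc recurrenceEnergy c u (n + 1) - recurrenceEnergy c u n
          ≤ (K + 1) * (K + 2) * S / (n + 3 / 2) := by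
            rw [le_div_iff₀' (by positivity)]
            exact mul_recurrenceEnergy_succ_sub_le hc.le hK defect_le
        _ ≤ (K + 1) * (K + 2) * S / n := by gcongr; linarith
        _ = D * (1 / (n : ℝ) ^ 2) * (κ * n * S) := by rw [hD]; field_simp
        _ ≤ D * (1 / (n : ℝ) ^ 2) * recurrenceEnergy c u n := by gcongr
    linarith

lemma norm_sq_isBigO_one_div (hc : |c| < 1)
    (h : (fun n : ℕ ↦ (n + 1) * ‖recurrenceDefect c u n‖) =O[atTop] fun n ↦ ‖u (n + 1)‖) :
    (fun n ↦ ‖u n‖ ^ 2) =O[atTop] fun n : ℕ ↦ 1 / (n : ℝ) := by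
  obtain ⟨κ, hκ, coercive⟩ := exists_eventually_mul_le_recurrenceEnergy hc u
  obtain ⟨C, hC⟩ := (recurrenceEnergy_isBigO_one hc h).bound
  refine IsBigO.of_bound (C / κ) ?_
  filter_upwards [hC, coercive, eventually_gt_atTop 0] with n bounded lower hn
  replace hn : (0 : ℝ) < n := mod_cast hn
  rw [norm_one, mul_one] at bounded
  rw [Real.norm_of_nonneg (by positivity), Real.norm_of_nonneg (by positivity),
    div_mul_div_comm, mul_one, le_div_iff₀' (by positivity)]
  calc κ * n * ‖u n‖ ^ 2
      ≤ κ * n * (‖u (n + 1)‖ ^ 2 + ‖u n‖ ^ 2) := by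
        gcongr; exact le_add_of_nonneg_left (sq_nonneg _)
    _ ≤ C := lower.trans ((le_abs_self _).trans bounded)

end Energy

lemma sq_add_one_rpow_neg_half_le {x : ℝ} (hx : 0 < x) :
    (x ^ 2 + 1) ^ (-(1 / 2 : ℝ)) ≤ 1 / x := by
  rw [Real.rpow_neg (by positivity), ← Real.sqrt_eq_rpow, one_div]
  exact inv_anti₀ hx (Real.le_sqrt_of_sq_le (by linarith))

lemma summable_mul_sq_add_one_rpow_of_isBigO_one_div {f : ℕ → ℝ}
    (hf : f =O[atTop] fun n : ℕ ↦ 1 / (n : ℝ)) :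
    Summable fun n : ℕ ↦ f n * ((n : ℝ) ^ 2 + 1) ^ (-(1 / 2 : ℝ)) := by
  have weight : (fun n : ℕ ↦ ((n : ℝ) ^ 2 + 1) ^ (-(1 / 2 : ℝ))) =O[atTop]
      fun n : ℕ ↦ 1 / (n : ℝ) := by
    refine IsBigO.of_bound' ?_
    filter_upwards [eventually_gt_atTop 0] with n hn
    rw [Real.norm_of_nonneg (by positivity), Real.norm_of_nonneg (by positivity)]
    exact sq_add_one_rpow_neg_half_le (mod_cast hn)
  refine summable_of_isBigO_nat (Real.summable_one_div_nat_pow.mpr one_lt_two) ?_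
  simpa only [← sq, one_div_pow] using hf.mul weight

lemma norm_cpow_half_sub_le (z : ℂ) (x : ℝ) :
    x * ‖z ^ ((1 : ℂ) / 2) - x‖ ≤ ‖z - x ^ 2‖ := by
  rw [one_div]
  have sq_root : (z ^ (2⁻¹ : ℂ)) ^ 2 = z := cpow_ofNat_inv_pow z 2
  have root_re : 0 ≤ (z ^ (2⁻¹ : ℂ)).re := by
    rw [cpow_inv_two_re]
    exact Real.sqrt_nonneg _
  have le_norm_add : x ≤ ‖z ^ (2⁻¹ : ℂ) + x‖ := by
    refine le_trans ?_ (re_le_norm _)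
    rw [add_re, ofReal_re]
    exact le_add_of_nonneg_left root_re
  calc x * ‖z ^ (2⁻¹ : ℂ) - x‖ ≤ ‖z ^ (2⁻¹ : ℂ) + x‖ * ‖z ^ (2⁻¹ : ℂ) - x‖ := by gcongr
    _ = ‖z - x ^ 2‖ := by rw [← norm_mul, ← sq_sub_sq, sq_root]

namespace IsRecSolution

variable {α : ℝ} {Λ : ℂ} {w : ℤ → ℂ}

lemma comp_neg (hw : IsRecSolution α Λ w) : IsRecSolution (-α) Λ fun n ↦ w (-n) := by
  intro n
  have h := hw (-n)
  rw [show -n + 1 = -(n - 1) by ring, show -n - 1 = -(n + 1) by ring] at h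
  push_cast at h ⊢
  rw [neg_sq] at h
  rw [div_neg]
  linear_combination -h

lemma recurrenceDefect_eq (hw : IsRecSolution α Λ w) (n : ℕ) :
    recurrenceDefect α⁻¹ (fun k : ℕ ↦ w k) n =
      2 / α * ((((n + 1 : ℝ) : ℂ) ^ 2 - Λ) ^ ((1 : ℂ) / 2) - (n + 1 : ℝ)) * w (n + 1) := by
  have h := hw (n + 1)
  rw [add_sub_cancel_right, show (n : ℤ) + 1 + 1 = n + 2 by ring] at h
  simp only [recurrenceDefect, real_smul]
  push_cast at h ⊢
  linear_combination h

lemma mul_norm_recurrenceDefect_le (hw : IsRecSolution α Λ w) (n : ℕ) :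
    (n + 1) * ‖recurrenceDefect α⁻¹ (fun k : ℕ ↦ w k) n‖ ≤
      ‖(2 / α : ℂ)‖ * ‖Λ‖ * ‖w (n + 1)‖ := by
  have root := norm_cpow_half_sub_le (((n + 1 : ℝ) : ℂ) ^ 2 - Λ) (n + 1)
  rw [sub_sub_cancel_left, norm_neg] at root
  rw [hw.recurrenceDefect_eq, norm_mul, norm_mul]
  calc _ = ‖(2 / α : ℂ)‖ * ((n + 1) *
        ‖(((n + 1 : ℝ) : ℂ) ^ 2 - Λ) ^ ((1 : ℂ) / 2) - (n + 1 : ℝ)‖) * ‖w (n + 1)‖ := by ring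
    _ ≤ ‖(2 / α : ℂ)‖ * ‖Λ‖ * ‖w (n + 1)‖ := by gcongr

lemma summable_nat (hα : 1 < |α|) (hw : IsRecSolution α Λ w) :
    Summable fun n : ℕ ↦ ‖w n‖ ^ 2 * ((n : ℝ) ^ 2 + 1) ^ (-(1 / 2 : ℝ)) := by
  have hc : |α⁻¹| < 1 := by
    rw [abs_inv]
    exact inv_lt_one_of_one_lt₀ hα
  refine summable_mul_sq_add_one_rpow_of_isBigO_one_div (norm_sq_isBigO_one_div hc ?_)
  refine IsBigO.of_bound (‖(2 / α : ℂ)‖ * ‖Λ‖) (Eventually.of_forall fun n ↦ ?_)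
  rw [norm_norm, Real.norm_of_nonneg (by positivity)]
  exact hw.mul_norm_recurrenceDefect_le n

lemma summable (hα : 1 < |α|) (hw : IsRecSolution α Λ w) :
    Summable fun n : ℤ ↦ ‖w n‖ ^ 2 * ((n : ℝ) ^ 2 + 1) ^ (-(1 / 2 : ℝ)) := by
  refine Summable.of_nat_of_neg (by simpa only [Int.cast_natCast] using hw.summable_nat hα) ?_
  simpa only [Int.cast_neg, Int.cast_natCast, neg_sq] using
    hw.comp_neg.summable_nat (by rwa [abs_neg])

end IsRecSolution

theorem rec_solutions_summable_and_two_dimensional_general (α : ℝ) (hα : 1 < |α|)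
    (Λ : ℂ) :
    (∀ w : ℤ → ℂ, IsRecSolution α Λ w →
        Summable fun n : ℤ => ‖w n‖ ^ 2 * ((n : ℝ) ^ 2 + 1) ^ (-(1 / 2 : ℝ))) ∧
      (∃ w₁ w₂ : ℤ → ℂ,
        (IsRecSolution α Λ w₁ ∧
          Summable fun n : ℤ => ‖w₁ n‖ ^ 2 * ((n : ℝ) ^ 2 + 1) ^ (-(1 / 2 : ℝ))) ∧
        (IsRecSolution α Λ w₂ ∧
          Summable fun n : ℤ => ‖w₂ n‖ ^ 2 * ((n : ℝ) ^ 2 + 1) ^ (-(1 / 2 : ℝ))) ∧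
        LinearIndependent ℂ ![w₁, w₂] ∧
        ∀ w : ℤ → ℂ, IsRecSolution α Λ w →
          (Summable fun n : ℤ => ‖w n‖ ^ 2 * ((n : ℝ) ^ 2 + 1) ^ (-(1 / 2 : ℝ))) →
          ∃ a b : ℂ, w = a • w₁ + b • w₂) := by
  obtain ⟨w₁, h₁, w₂, h₂, independent, spanning⟩ :=
    threeTermSolutions.exists_linearIndependent_pair
      (b := fun n : ℤ ↦ 2 / (α : ℂ) * ((n : ℂ) ^ 2 - Λ) ^ ((1 : ℂ) / 2))
      intCast_add_half_ne_zero intCast_sub_half_ne_zero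
  exact ⟨fun _ ↦ IsRecSolution.summable hα, w₁, w₂, ⟨h₁, IsRecSolution.summable hα h₁⟩,
    ⟨h₂, IsRecSolution.summable hα h₂⟩, independent, fun w hw _ ↦ spanning w hw⟩

/-- Core of Theorem 3.3(2): for `α > 1` and nonreal `Λ`, every solution of the
recurrence (1.eq) satisfies `∑_{n∈ℤ} |w_n|² (n²+1)^{-1/2} < ∞`, and consequently the
space of solutions satisfying this summability condition has dimension exactly `2`. -/
theorem rec_solutions_summable_and_two_dimensional (α : ℝ) (hα : 1 < α)
    (Λ : ℂ) (hΛ : Λ.im ≠ 0) :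
    (∀ w : ℤ → ℂ, IsRecSolution α Λ w →
        Summable fun n : ℤ => ‖w n‖ ^ 2 * ((n : ℝ) ^ 2 + 1) ^ (-(1 / 2 : ℝ))) ∧
      (∃ w₁ w₂ : ℤ → ℂ,
        (IsRecSolution α Λ w₁ ∧
          Summable fun n : ℤ => ‖w₁ n‖ ^ 2 * ((n : ℝ) ^ 2 + 1) ^ (-(1 / 2 : ℝ))) ∧
        (IsRecSolution α Λ w₂ ∧
          Summable fun n : ℤ => ‖w₂ n‖ ^ 2 * ((n : ℝ) ^ 2 + 1) ^ (-(1 / 2 : ℝ))) ∧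
        LinearIndependent ℂ ![w₁, w₂] ∧
        ∀ w : ℤ → ℂ, IsRecSolution α Λ w →
          (Summable fun n : ℤ => ‖w n‖ ^ 2 * ((n : ℝ) ^ 2 + 1) ^ (-(1 / 2 : ℝ))) →
          ∃ a b : ℂ, w = a • w₁ + b • w₂) := by
  exact rec_solutions_summable_and_two_dimensional_general α (hα.trans_le (le_abs_self α)) Λ
end

section
/- Let α > 0 with α ≠ 1, and let Λ ∈ ℂ \ [0,∞). Let λ₊ = 1/α + √(1/α² − 1) and λ₋ = 1/α − √(1/α² − 1) be the two roots of λ² − (2/α)λ + 1 = 0 (principal branch of the square root; for α > 1 these roots are non-real of modulus 1). Then there exist a constant C > 0 and two sequences w⁺, w⁻ : {0,1,2,…} → ℂ, each satisfying (n+1/2)·w_{n+1} − (2/α)·√(n²−Λ)·w_n + (n−1/2)·w_{n−1} = 0 for all n ≥ 1, such that |n^{1/2} · λ₊^{−n} · w⁺_n − 1| ≤ C/n and |n^{1/2} · λ₋^{−n} · w⁻_n − 1| ≤ C/n for all n ≥ 1. -/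
open Complex

/-!
Put `l = λ₊`, `m = λ₋`, so `l * m = 1`. The substitution `w n = l ^ n / √n * u n` turns the
recurrence into an `O(1/n²)` perturbation of `(E - 1) (E - r) u = 0`, where `E` is the shift and
`r = m / l ≠ 1`: the factor `1/√n` removes the `1/n` terms of the coefficients. Moving the
perturbation `F u` to the right-hand side and inverting each first-order factor by the variation of
constants that preserves decay (`O(1/n²)` is sent to `O(1/n)`) gives a fixed point equation
`u = 1 + T u` on bounded sequences. After a shift of the index `T` is a contraction, and
`u - 1 = T u = O(1/n)`. The solution found for large `n` is continued backwards because the last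
coefficient never vanishes.
-/

open Asymptotics Filter Topology BoundedContinuousFunction

theorem hasSum_sub_succ_of_antitone {a : ℕ → ℝ} {l : ℝ} (ha : Antitone a)
    (hl : Tendsto a atTop (𝓝 l)) : HasSum (fun n ↦ a n - a (n + 1)) (a 0 - l) := by
  rw [hasSum_iff_tendsto_nat_of_nonneg fun n ↦ sub_nonneg.2 (ha n.le_succ)]
  simpa only [Finset.sum_range_sub'] using hl.const_sub (a 0)

theorem exists_hasSum_inv_sq_le {y : ℝ} (hy : 1 ≤ y) :
    ∃ s ≤ 2 / y, HasSum (fun j : ℕ ↦ ((j + y) ^ 2)⁻¹) s := by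
  have hanti : Antitone fun j : ℕ ↦ 2 / (j + y) := fun i j hij ↦ by
    dsimp only
    gcongr
  have htendsto : Tendsto (fun j : ℕ ↦ 2 / (j + y)) atTop (𝓝 0) :=
    tendsto_const_nhds.div_atTop
      (tendsto_atTop_add_const_right _ y tendsto_natCast_atTop_atTop)
  have htelescope := hasSum_sub_succ_of_antitone hanti htendsto
  have hle (j : ℕ) : ((j + y) ^ 2)⁻¹ ≤ 2 / (j + y) - 2 / ((j + 1 : ℕ) + y) := by
    have hj : 1 ≤ j + y := le_add_of_nonneg_of_le j.cast_nonneg hy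
    push_cast
    rw [div_sub_div _ _ (by positivity) (by positivity), inv_eq_one_div,
      div_le_div_iff₀ (by positivity) (by positivity)]
    nlinarith [hj]
  have hs := Summable.of_nonneg_of_le (fun j ↦ by positivity) hle htelescope.summable
  refine ⟨_, ?_, hs.hasSum⟩
  simpa using hasSum_le hle hs.hasSum htelescope

theorem summable_norm_of_le_div_sq {E : Type*} [SeminormedAddCommGroup E] {x M : ℝ} (hx : 1 ≤ x)
    {f : ℕ → E} (hf : ∀ k : ℕ, ‖f k‖ ≤ M / (k + x) ^ 2) : Summable (‖f ·‖) := by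
  obtain ⟨s, -, hs⟩ := exists_hasSum_inv_sq_le hx
  exact .of_nonneg_of_le (fun k ↦ norm_nonneg _) hf (hs.mul_left M).summable

theorem exists_eq_add_apply_of_norm_le {ι E : Type*} [TopologicalSpace ι] [DiscreteTopology ι]
    [NormedAddCommGroup E] [CompleteSpace E] (T : (ι →ᵇ E) →+ (ι → E)) {K : NNReal} (hK : K < 1)
    (hT : ∀ u i, ‖T u i‖ ≤ K * ‖u‖) (v : ι →ᵇ E) : ∃ u : ι →ᵇ E, ∀ i, u i = v i + T u i := by
  let Φ (u : ι →ᵇ E) : ι →ᵇ E := v + ofNormedAddCommGroupDiscrete (T u) (K * ‖u‖) (hT u)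
  have hΦ : ContractingWith K Φ := by
    refine ⟨hK, LipschitzWith.of_dist_le_mul fun u u' ↦ ?_⟩
    rw [dist_add_left, dist_le (by positivity), dist_eq_norm]
    intro i
    simpa [dist_eq_norm] using hT (u - u') i
  exact ⟨hΦ.fixedPoint, fun i ↦ (DFunLike.congr_fun hΦ.fixedPoint_isFixedPt i).symm⟩

theorem nonneg_of_norm_le_div {E : Type*} [SeminormedAddCommGroup E] {z : E} {M c : ℝ}
    (hc : 0 < c) (hz : ‖z‖ ≤ M / c) : 0 ≤ M := by
  rw [le_div_iff₀ hc] at hz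
  exact (by positivity : 0 ≤ ‖z‖ * c).trans hz

section NormedField

variable {𝕜 : Type*} [NormedField 𝕜]

/-- The solution of `x (n + 1) = ρ * x n + f n` given by variation of constants, started at
`x 0 = 0` if `‖ρ‖ < 1` and summed from infinity otherwise. With this choice `f n = O(1/n²)` implies
`x n = O(1/n)`, whatever `ρ` is. -/
noncomputable def decayingSolution (ρ : 𝕜) (f : ℕ → 𝕜) (n : ℕ) : 𝕜 :=
  if ‖ρ‖ < 1 then n.rec 0 fun k x ↦ ρ * x + f k else -∑' j, ρ⁻¹ ^ (j + 1) * f (n + j)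

theorem decayingSolution_of_lt {ρ : 𝕜} (hρ : ‖ρ‖ < 1) (f : ℕ → 𝕜) (n : ℕ) :
    decayingSolution ρ f n = n.rec 0 fun k x ↦ ρ * x + f k :=
  if_pos hρ

theorem decayingSolution_of_le {ρ : 𝕜} (hρ : 1 ≤ ‖ρ‖) (f : ℕ → 𝕜) (n : ℕ) :
    decayingSolution ρ f n = -∑' j, ρ⁻¹ ^ (j + 1) * f (n + j) :=
  if_neg hρ.not_gt

theorem norm_inv_pow_mul_le {ρ : 𝕜} (hρ : 1 ≤ ‖ρ‖) (j : ℕ) (z : 𝕜) : ‖ρ⁻¹ ^ j * z‖ ≤ ‖z‖ := by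
  rw [norm_mul, norm_pow, norm_inv]
  exact mul_le_of_le_one_left (norm_nonneg z)
    (pow_le_one₀ (by positivity) (inv_le_one_of_one_le₀ hρ))

theorem norm_decayingSolution_le_of_le {ρ : 𝕜} (hρ : 1 ≤ ‖ρ‖) {x M : ℝ} (hx : 1 ≤ x)
    {f : ℕ → 𝕜} (hf : ∀ k : ℕ, ‖f k‖ ≤ M / (k + x) ^ 2) (n : ℕ) :
    ‖decayingSolution ρ f n‖ ≤ 2 * M / (n + x) := by
  have hM : 0 ≤ M := nonneg_of_norm_le_div (by positivity) (hf 0)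
  obtain ⟨s, hs, hsum⟩ := exists_hasSum_inv_sq_le (le_add_of_nonneg_of_le n.cast_nonneg hx)
  have hterm (j : ℕ) : ‖ρ⁻¹ ^ (j + 1) * f (n + j)‖ ≤ M * ((j + (n + x)) ^ 2)⁻¹ := by
    refine (norm_inv_pow_mul_le hρ _ _).trans ((hf _).trans_eq ?_)
    push_cast
    ring
  rw [decayingSolution_of_le hρ, norm_neg]
  calc ‖∑' j, ρ⁻¹ ^ (j + 1) * f (n + j)‖ ≤ M * s := tsum_of_norm_bounded (hsum.mul_left M) hterm
    _ ≤ M * (2 / (n + x)) := by gcongr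
    _ = 2 * M / (n + x) := by ring

theorem norm_decayingSolution_le_of_lt {ρ : 𝕜} (hρ : ‖ρ‖ < 1) {x M : ℝ}
    (hx : 2 / (1 - ‖ρ‖) ≤ x) {f : ℕ → 𝕜} (hf : ∀ k : ℕ, ‖f k‖ ≤ M / (k + x) ^ 2) (n : ℕ) :
    ‖decayingSolution ρ f n‖ ≤ 2 / (1 - ‖ρ‖) * M / (n + x) := by
  have hρ' : 0 < 1 - ‖ρ‖ := sub_pos.2 hρ
  set D := 2 / (1 - ‖ρ‖) with hD
  have hD2 : 2 ≤ D := (le_div_iff₀ hρ').2 (by linarith [norm_nonneg ρ])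
  have hρD : ‖ρ‖ * D = D - 2 := by
    rw [hD]
    field_simp
    ring
  have hx0 : 0 < x := by linarith
  have hM : 0 ≤ M := nonneg_of_norm_le_div (by positivity) (hf 0)
  rw [decayingSolution_of_lt hρ]
  induction n with
  | zero => simpa using by positivity
  | succ n ih =>
    have hy : D ≤ n + x := le_add_of_nonneg_of_le n.cast_nonneg hx
    have hstep : (D - 2) / (n + x) + 1 / (n + x) ^ 2 ≤ D / ((n + 1 : ℕ) + x) := by
      push_cast
      rw [div_add_div _ _ (by positivity) (by positivity),
        div_le_div_iff₀ (by positivity) (by positivity)]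
      have hquad : D * (n + x) + 1 ≤ 2 * (n + x) ^ 2 + (n + x) := by nlinarith [hy]
      nlinarith [mul_le_mul_of_nonneg_left hquad (by positivity : 0 ≤ n + x)]
    refine (norm_add_le _ _).trans ?_
    rw [norm_mul]
    calc _ ≤ ‖ρ‖ * (D * M / (n + x)) + M / (n + x) ^ 2 := by gcongr; exact hf n
      _ = M * (‖ρ‖ * D / (n + x) + 1 / (n + x) ^ 2) := by ring
      _ ≤ M * (D / ((n + 1 : ℕ) + x)) := by rw [hρD]; gcongr
      _ = D * M / ((n + 1 : ℕ) + x) := by ring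

theorem exists_norm_decayingSolution_le (ρ : 𝕜) :
    ∃ D : ℝ, 1 ≤ D ∧ ∀ {x M : ℝ}, D ≤ x → ∀ {f : ℕ → 𝕜},
      (∀ k : ℕ, ‖f k‖ ≤ M / (k + x) ^ 2) → ∀ n : ℕ,
        ‖decayingSolution ρ f n‖ ≤ D * M / (n + x) := by
  rcases lt_or_ge ‖ρ‖ 1 with hρ | hρ
  · refine ⟨2 / (1 - ‖ρ‖), ?_, fun hx _ hf ↦ norm_decayingSolution_le_of_lt hρ hx hf⟩
    rw [le_div_iff₀ (sub_pos.2 hρ)]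
    linarith [norm_nonneg ρ]
  · exact ⟨2, one_le_two, fun hx _ hf ↦ norm_decayingSolution_le_of_le hρ (one_le_two.trans hx) hf⟩

/-- The solution of `x (n + 2) - (1 + r) * x (n + 1) + r * x n = f n` given by the partial fraction
decomposition `1 / ((E - 1) (E - r)) = (1 / (E - 1) - 1 / (E - r)) / (1 - r)` in the shift `E`; for
`r = 1` it is the junk value `0`. -/
noncomputable def decayingSolution₂ (r : 𝕜) (f : ℕ → 𝕜) : ℕ → 𝕜 :=
  (1 - r)⁻¹ • (decayingSolution 1 f - decayingSolution r f)

theorem exists_norm_decayingSolution₂_le (r : 𝕜) :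
    ∃ D : ℝ, 1 ≤ D ∧ ∀ {x M : ℝ}, D ≤ x → ∀ {f : ℕ → 𝕜},
      (∀ k : ℕ, ‖f k‖ ≤ M / (k + x) ^ 2) → ∀ n : ℕ,
        ‖decayingSolution₂ r f n‖ ≤ D * M / (n + x) := by
  obtain ⟨D₁, hD₁, h₁⟩ := exists_norm_decayingSolution_le (1 : 𝕜)
  obtain ⟨Dᵣ, hDᵣ, hᵣ⟩ := exists_norm_decayingSolution_le r
  have hc : 0 ≤ ‖(1 - r)⁻¹‖ := norm_nonneg _
  refine ⟨(‖(1 - r)⁻¹‖ + 1) * (D₁ + Dᵣ), by nlinarith, fun {x M} hx f hf n ↦ ?_⟩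
  have hxpos : 0 < x := by nlinarith
  have hM : 0 ≤ M := nonneg_of_norm_le_div (by positivity) (hf 0)
  rw [decayingSolution₂, Pi.smul_apply, norm_smul, Pi.sub_apply]
  calc _ ≤ ‖(1 - r)⁻¹‖ * (D₁ * M / (n + x) + Dᵣ * M / (n + x)) := by
        gcongr
        exact (norm_sub_le _ _).trans
          (add_le_add (h₁ (by nlinarith) hf n) (hᵣ (by nlinarith) hf n))
    _ = ‖(1 - r)⁻¹‖ * ((D₁ + Dᵣ) * M / (n + x)) := by ring
    _ ≤ (‖(1 - r)⁻¹‖ + 1) * ((D₁ + Dᵣ) * M / (n + x)) := by gcongr; linarith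
    _ = _ := by ring

variable [CompleteSpace 𝕜]

theorem summable_inv_pow_mul {ρ : 𝕜} (hρ : 1 ≤ ‖ρ‖) {f : ℕ → 𝕜}
    (hf : Summable (‖f ·‖)) (n : ℕ) : Summable fun j ↦ ρ⁻¹ ^ (j + 1) * f (n + j) := by
  refine .of_norm_bounded ((summable_nat_add_iff n).2 hf) fun j ↦ ?_
  rw [add_comm n]
  exact norm_inv_pow_mul_le hρ _ _

theorem decayingSolution_succ (ρ : 𝕜) {f : ℕ → 𝕜} (hf : Summable (‖f ·‖))
    (n : ℕ) : decayingSolution ρ f (n + 1) = ρ * decayingSolution ρ f n + f n := by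
  rcases lt_or_ge ‖ρ‖ 1 with hρ | hρ
  · simp only [decayingSolution_of_lt hρ]
  · have hρ0 : ρ ≠ 0 := norm_pos_iff.1 (one_pos.trans_le hρ)
    have hshift (j : ℕ) : ρ⁻¹ ^ (j + 1) * f (n + 1 + j) =
        ρ * (ρ⁻¹ ^ (j + 1 + 1) * f (n + (j + 1))) := by
      rw [add_right_comm, add_assoc n, pow_succ _ (j + 1)]
      field_simp
    simp only [decayingSolution_of_le hρ, hshift, tsum_mul_left,
      (summable_inv_pow_mul hρ hf n).tsum_eq_zero_add]
    rw [zero_add, pow_one, add_zero]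
    linear_combination f n * mul_inv_cancel₀ hρ0

theorem decayingSolution_add (ρ : 𝕜) {f g : ℕ → 𝕜} (hf : Summable (‖f ·‖))
    (hg : Summable (‖g ·‖)) :
    decayingSolution ρ (f + g) = decayingSolution ρ f + decayingSolution ρ g := by
  funext n
  rcases lt_or_ge ‖ρ‖ 1 with hρ | hρ
  · simp only [Pi.add_apply, decayingSolution_of_lt hρ]
    induction n with
    | zero => simp
    | succ n ih => simp only [ih]; ring
  · simp only [Pi.add_apply, decayingSolution_of_le hρ, mul_add]
    rw [(summable_inv_pow_mul hρ hf n).tsum_add (summable_inv_pow_mul hρ hg n), neg_add]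

theorem decayingSolution₂_add_two {r : 𝕜} (hr : r ≠ 1) {f : ℕ → 𝕜} (hf : Summable (‖f ·‖))
    (n : ℕ) : decayingSolution₂ r f (n + 2) - (1 + r) * decayingSolution₂ r f (n + 1) +
      r * decayingSolution₂ r f n = f n := by
  have hr' : 1 - r ≠ 0 := sub_ne_zero.2 hr.symm
  simp only [decayingSolution₂, Pi.smul_apply, Pi.sub_apply, smul_eq_mul,
    decayingSolution_succ _ hf]
  field_simp
  ring

theorem decayingSolution₂_add (r : 𝕜) {f g : ℕ → 𝕜} (hf : Summable (‖f ·‖))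
    (hg : Summable (‖g ·‖)) :
    decayingSolution₂ r (f + g) = decayingSolution₂ r f + decayingSolution₂ r g := by
  simp only [decayingSolution₂, decayingSolution_add _ hf hg, ← smul_add]
  congr 1
  abel

theorem exists_solution_norm_sub_one_le {r : 𝕜} (hr : r ≠ 1) (K : ℝ) :
    ∃ X : ℝ, ∀ x ≥ X, ∀ F : (ℕ →ᵇ 𝕜) →+ (ℕ → 𝕜),
      (∀ u, ∀ k : ℕ, ‖F u k‖ ≤ K * ‖u‖ / (k + x) ^ 2) →
      ∃ (u : ℕ →ᵇ 𝕜) (C : ℝ), (∀ n, u (n + 2) - (1 + r) * u (n + 1) + r * u n = F u n) ∧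
        ∀ n : ℕ, ‖u n - 1‖ ≤ C / (n + x) := by
  obtain ⟨D, hD1, hD⟩ := exists_norm_decayingSolution₂_le r
  refine ⟨max D (2 * D * K), fun x hx F hF ↦ ?_⟩
  obtain ⟨hDx, hKx⟩ := max_le_iff.1 hx
  have hsum (u) : Summable (‖F u ·‖) := summable_norm_of_le_div_sq (hD1.trans hDx) (hF u)
  let T : (ℕ →ᵇ 𝕜) →+ (ℕ → 𝕜) := .mk' (fun u ↦ decayingSolution₂ r (F u)) fun u v ↦ by
    rw [map_add, decayingSolution₂_add r (hsum u) (hsum v)]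
  have hT (u n) : ‖T u n‖ ≤ D * (K * ‖u‖) / (n + x) := hD hDx (hF u) n
  have hcontr (u n) : ‖T u n‖ ≤ (1 / 2 : NNReal) * ‖u‖ := by
    refine (hT u n).trans ?_
    have hn : (0 : ℝ) ≤ n := n.cast_nonneg
    rw [div_le_iff₀ (by linarith)]
    push_cast
    nlinarith [mul_le_mul_of_nonneg_right hKx (norm_nonneg u), mul_nonneg hn (norm_nonneg u)]
  obtain ⟨u, hu⟩ := exists_eq_add_apply_of_norm_le T (NNReal.half_lt_self one_ne_zero) hcontr 1
  simp only [BoundedContinuousFunction.coe_one, Pi.one_apply] at hu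
  refine ⟨u, D * (K * ‖u‖), fun n ↦ ?_, fun n ↦ ?_⟩
  · have h : T u (n + 2) - (1 + r) * T u (n + 1) + r * T u n = F u n :=
      decayingSolution₂_add_two hr (hsum u) n
    rw [hu n, hu (n + 1), hu (n + 2), ← h]
    ring
  · rw [hu n, add_sub_cancel_left]
    exact hT u n

theorem exists_solution_norm_sub_one_le_of_coeff {r : 𝕜} (hr : r ≠ 1) (A B C : ℝ) :
    ∃ X : ℝ, ∀ x ≥ X, ∀ a b c : ℕ → 𝕜, (∀ n : ℕ, ‖a n - 1‖ ≤ A / (n + x) ^ 2) →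
      (∀ n : ℕ, ‖b n - (1 + r)‖ ≤ B / (n + x) ^ 2) → (∀ n : ℕ, ‖c n - r‖ ≤ C / (n + x) ^ 2) →
      ∃ (u : ℕ → 𝕜) (D : ℝ), (∀ n, a n * u (n + 2) - b n * u (n + 1) + c n * u n = 0) ∧
        ∀ n : ℕ, ‖u n - 1‖ ≤ D / (n + x) := by
  obtain ⟨X, hX⟩ := exists_solution_norm_sub_one_le hr (A + B + C)
  refine ⟨X, fun x hx a b c ha hb hc ↦ ?_⟩
  let F : (ℕ →ᵇ 𝕜) →+ (ℕ → 𝕜) := .mk' (fun u n ↦ (b n - (1 + r)) * u (n + 1) -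
    (a n - 1) * u (n + 2) - (c n - r) * u n) fun u v ↦ by
      ext n
      simp only [BoundedContinuousFunction.coe_add, Pi.add_apply]
      ring
  have hF (u) (n : ℕ) : ‖F u n‖ ≤ (A + B + C) * ‖u‖ / (n + x) ^ 2 := by
    have hmul {z : 𝕜} {M : ℝ} (hz : ‖z‖ ≤ M) (k : ℕ) : ‖z * u k‖ ≤ M * ‖u‖ :=
      norm_mul_le_of_le hz (u.norm_coe_le_norm k)
    refine (norm_sub_le_of_le (norm_sub_le_of_le (hmul (hb n) _) (hmul (ha n) _))
      (hmul (hc n) _)).trans_eq ?_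
    ring
  obtain ⟨u, D, hrec, hu⟩ := hX x hx F hF
  refine ⟨u, D, fun n ↦ ?_, hu⟩
  have h : u (n + 2) - (1 + r) * u (n + 1) + r * u n =
    (b n - (1 + r)) * u (n + 1) - (a n - 1) * u (n + 2) - (c n - r) * u n := hrec n
  linear_combination h

theorem exists_solution_isBigO_sub_one {r : 𝕜} (hr : r ≠ 1) {a b c : ℕ → 𝕜}
    (ha : (fun n ↦ a n - 1) =O[atTop] fun n : ℕ ↦ ((n : ℝ) ^ 2)⁻¹)
    (hb : (fun n ↦ b n - (1 + r)) =O[atTop] fun n : ℕ ↦ ((n : ℝ) ^ 2)⁻¹)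
    (hc : (fun n ↦ c n - r) =O[atTop] fun n : ℕ ↦ ((n : ℝ) ^ 2)⁻¹) :
    ∃ u : ℕ → 𝕜, (∀ᶠ n in atTop, a n * u (n + 2) - b n * u (n + 1) + c n * u n = 0) ∧
      (fun n ↦ u n - 1) =O[atTop] fun n : ℕ ↦ (n : ℝ)⁻¹ := by
  obtain ⟨A, hA⟩ := ha.bound
  obtain ⟨B, hB⟩ := hb.bound
  obtain ⟨C, hC⟩ := hc.bound
  obtain ⟨X, hX⟩ := exists_solution_norm_sub_one_le_of_coeff hr A B C
  obtain ⟨N, hN⟩ := eventually_atTop.1 (hA.and (hB.and hC))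
  obtain ⟨m, hNm, hXm⟩ : ∃ m : ℕ, N ≤ m ∧ X ≤ m :=
    ⟨max N ⌈X⌉₊, le_max_left _ _, (Nat.le_ceil X).trans (mod_cast le_max_right _ _)⟩
  have hbound (n : ℕ) := hN (n + m) (hNm.trans (Nat.le_add_left m n))
  simp only [norm_inv, norm_pow, Real.norm_natCast, ← div_eq_mul_inv] at hbound
  simp only [Nat.cast_add] at hbound
  obtain ⟨u, D, hrec, hu⟩ := hX m hXm (fun n ↦ a (n + m)) (fun n ↦ b (n + m)) (fun n ↦ c (n + m))
    (fun n ↦ (hbound n).1) (fun n ↦ (hbound n).2.1) fun n ↦ (hbound n).2.2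
  refine ⟨fun n ↦ u (n - m), ?_, .of_bound D ?_⟩
  · filter_upwards [eventually_ge_atTop m] with n hn
    obtain ⟨k, rfl⟩ := Nat.exists_eq_add_of_le' hn
    rw [add_right_comm, add_right_comm k m 1]
    simpa only [Nat.add_sub_cancel] using hrec k
  · filter_upwards [eventually_ge_atTop m] with n hn
    simpa [← div_eq_mul_inv, Nat.cast_sub hn] using hu (n - m)

theorem exists_solution_isBigO_div_pow_sub_one {l m : 𝕜} (hl : l ≠ 0) (hlm : l ≠ m)
    {a b c : ℕ → 𝕜} (ha : (fun n ↦ a n - 1) =O[atTop] fun n : ℕ ↦ ((n : ℝ) ^ 2)⁻¹)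
    (hb : (fun n ↦ b n - (l + m)) =O[atTop] fun n : ℕ ↦ ((n : ℝ) ^ 2)⁻¹)
    (hc : (fun n ↦ c n - l * m) =O[atTop] fun n : ℕ ↦ ((n : ℝ) ^ 2)⁻¹) :
    ∃ v : ℕ → 𝕜, (∀ᶠ n in atTop, a n * v (n + 2) - b n * v (n + 1) + c n * v n = 0) ∧
      (fun n ↦ v n / l ^ n - 1) =O[atTop] fun n : ℕ ↦ (n : ℝ)⁻¹ := by
  have hb' : (fun n ↦ l⁻¹ * b n - (1 + m / l)) =O[atTop] fun n : ℕ ↦ ((n : ℝ) ^ 2)⁻¹ :=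
    (hb.const_mul_left l⁻¹).congr_left fun n ↦ by field_simp
  have hc' : (fun n ↦ l⁻¹ ^ 2 * c n - m / l) =O[atTop] fun n : ℕ ↦ ((n : ℝ) ^ 2)⁻¹ :=
    (hc.const_mul_left (l⁻¹ ^ 2)).congr_left fun n ↦ by field_simp
  obtain ⟨u, hrec, hu⟩ := exists_solution_isBigO_sub_one
    (fun h ↦ hlm ((div_eq_one_iff_eq hl).1 h).symm) ha hb' hc'
  refine ⟨fun n ↦ l ^ n * u n, ?_, hu.congr_left fun n ↦ by field_simp⟩
  filter_upwards [hrec] with n hn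
  field_simp at hn
  linear_combination l ^ n * hn

end NormedField

theorem exists_eventuallyEq_forall_recurrence {K : Type*} [Field K] {a b c : ℕ → K}
    (hc : ∀ n, c n ≠ 0) {w : ℕ → K}
    (hw : ∀ᶠ n in atTop, a n * w (n + 2) - b n * w (n + 1) + c n * w n = 0) :
    ∃ w' : ℕ → K, w' =ᶠ[atTop] w ∧ ∀ n, a n * w' (n + 2) - b n * w' (n + 1) + c n * w' n = 0 := by
  obtain ⟨N, hN⟩ := eventually_atTop.1 hw
  clear hw
  induction N generalizing w with
  | zero => exact ⟨w, .rfl, fun n ↦ hN n n.zero_le⟩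
  | succ N ih =>
    let w₁ := Function.update w N ((b N * w (N + 1) - a N * w (N + 2)) / c N)
    have hw₁ {n : ℕ} (hn : N < n) : w₁ n = w n := Function.update_of_ne hn.ne' _ _
    have hw₁N : c N * w₁ N = b N * w (N + 1) - a N * w (N + 2) := by
      simp [w₁, mul_div_cancel₀ _ (hc N)]
    obtain ⟨w', hw', hrec⟩ := ih (w := w₁) fun n hn ↦ by
      rcases hn.eq_or_lt with rfl | hn
      · rw [hw₁ (by lia), hw₁ (by lia), hw₁N]
        ring
      · rw [hw₁ (by lia), hw₁ (by lia), hw₁ hn, hN n hn]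
    exact ⟨w', hw'.trans ((eventually_gt_atTop N).mono fun n hn ↦ hw₁ hn), hrec⟩

theorem norm_sub_one_le_norm_sq_sub_one {z : ℂ} (hz : 0 ≤ z.re) : ‖z - 1‖ ≤ ‖z ^ 2 - 1‖ := by
  have h : 1 ≤ ‖z + 1‖ := by
    refine le_trans ?_ (Complex.re_le_norm _)
    simpa using hz
  rw [show z ^ 2 - 1 = (z - 1) * (z + 1) by ring, norm_mul]
  exact le_mul_of_one_le_right (norm_nonneg _) h

theorem isBigO_inv_pow_comp_succ {E : Type*} [Norm E] {f : ℕ → E} {k : ℕ}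
    (hf : f =O[atTop] fun n : ℕ ↦ ((n : ℝ) ^ k)⁻¹) :
    (fun n ↦ f (n + 1)) =O[atTop] fun n : ℕ ↦ ((n : ℝ) ^ k)⁻¹ := by
  refine (hf.comp_tendsto (tendsto_add_atTop_nat 1)).trans (.of_bound 1 ?_)
  filter_upwards [eventually_gt_atTop 0] with n hn
  simp only [Function.comp_apply, norm_inv, norm_pow, Real.norm_natCast, one_mul]
  gcongr
  exact n.le_succ

theorem isBigO_sqrt_sq_sub_div_sub_one (Λ : ℂ) :
    (fun n : ℕ ↦ ((n : ℂ) ^ 2 - Λ) ^ (1 / 2 : ℂ) / n - 1) =O[atTop]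
      fun n : ℕ ↦ ((n : ℝ) ^ 2)⁻¹ := by
  refine .of_bound ‖Λ‖ ?_
  filter_upwards [eventually_ne_atTop 0] with n hn
  have hn' : (n : ℂ) ≠ 0 := mod_cast hn
  refine (norm_sub_one_le_norm_sq_sub_one ?_).trans_eq ?_
  · rw [div_natCast_re, one_div, cpow_inv_two_re]
    positivity
  · rw [div_pow, one_div, cpow_ofNat_inv_pow, div_sub_one (pow_ne_zero 2 hn'), sub_sub_cancel_left]
    simp [div_eq_mul_inv]

theorem isBigO_add_half_div_sqrt_sub_one :
    (fun n : ℕ ↦ (((n + 1 / 2) / (√n * √(n + 1 : ℕ)) : ℝ) : ℂ) - 1) =O[atTop]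
      fun n : ℕ ↦ ((n : ℝ) ^ 2)⁻¹ := by
  refine .of_bound 1 ?_
  filter_upwards [eventually_gt_atTop 0] with n hn
  have hn' : (0 : ℝ) < n := mod_cast hn
  have hsq : ((n + 1 / 2) / (√n * √(n + 1 : ℕ)) : ℝ) ^ 2 - 1 = (4 * (n * (n + 1)) : ℝ)⁻¹ := by
    rw [div_pow, mul_pow, Real.sq_sqrt n.cast_nonneg, Real.sq_sqrt (n + 1).cast_nonneg]
    push_cast
    field_simp
    ring
  refine (norm_sub_one_le_norm_sq_sub_one (by rw [ofReal_re]; positivity)).trans ?_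
  rw [← ofReal_pow, ← ofReal_one, ← ofReal_sub, norm_real, hsq, one_mul, norm_inv, norm_inv,
    Real.norm_of_nonneg (by positivity), Real.norm_of_nonneg (by positivity)]
  gcongr
  nlinarith

/-- The recurrence (1.eq) for `w`, on the indices `n ≥ 1`; `β` stands for `2 / α`, the sum of the
two characteristic roots. -/
def IsRecurrenceSolution (β Λ : ℂ) (w : ℕ → ℂ) : Prop :=
  ∀ n : ℕ, 1 ≤ n →
    ((n : ℂ) + 1 / 2) * w (n + 1) - β * ((n : ℂ) ^ 2 - Λ) ^ ((1 : ℂ) / 2) * w n +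
      ((n : ℂ) - 1 / 2) * w (n - 1) = 0

theorem exists_isRecurrenceSolution_of_eventually {β Λ : ℂ} {w : ℕ → ℂ}
    (hw : ∀ᶠ n : ℕ in atTop, ((n : ℂ) + 3 / 2) * w (n + 2) -
      β * ((n + 1 : ℕ) ^ 2 - Λ) ^ (1 / 2 : ℂ) * w (n + 1) + ((n : ℂ) + 1 / 2) * w n = 0) :
    ∃ w' : ℕ → ℂ, w' =ᶠ[atTop] w ∧ IsRecurrenceSolution β Λ w' := by
  have hne (n : ℕ) : (n : ℂ) + 1 / 2 ≠ 0 := fun h ↦ by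
    have := congrArg re h
    norm_num at this
    linarith [n.cast_nonneg (α := ℝ)]
  obtain ⟨w', hw', hrec⟩ := exists_eventuallyEq_forall_recurrence hne hw
  refine ⟨w', hw', fun n hn ↦ ?_⟩
  obtain ⟨k, rfl⟩ := Nat.exists_eq_add_of_le' hn
  have h := hrec k
  rw [Nat.add_sub_cancel]
  push_cast at h ⊢
  linear_combination h

theorem recurrence_div_sqrt {β s : ℂ} {v : ℕ → ℂ} {n : ℕ} (hn : n ≠ 0)
    (hv : (((n + 1 : ℕ) + 1 / 2) / (√(n + 1 : ℕ) * √(n + 1 + 1 : ℕ)) : ℝ) * v (n + 2) -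
      β * (s / (n + 1 : ℕ)) * v (n + 1) +
        ((n + 1 / 2) / (√n * √(n + 1 : ℕ)) : ℝ) * v n = 0) :
    ((n : ℂ) + 3 / 2) * (v (n + 2) / √(n + 1 + 1 : ℕ)) - β * s * (v (n + 1) / √(n + 1 : ℕ)) +
      ((n : ℂ) + 1 / 2) * (v n / √n) = 0 := by
  have hsqrt {k : ℕ} (hk : k ≠ 0) : ((√k : ℝ) : ℂ) ≠ 0 := by
    rw [ofReal_ne_zero]
    positivity
  have h₀ := hsqrt hn
  have h₁ := hsqrt n.succ_ne_zero
  have h₂ := hsqrt (n + 1).succ_ne_zero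
  have hsq : (√(n + 1 : ℕ) : ℂ) ^ 2 = (n : ℂ) + 1 := by
    rw [← ofReal_pow, Real.sq_sqrt (n + 1).cast_nonneg]
    push_cast
    rfl
  push_cast at hv h₀ h₁ h₂ hsq ⊢
  rw [← hsq] at hv
  calc _ = √(n + 1 : ℝ) *
      ((√(n + 1 : ℝ) ^ 2 + 1 / 2) / (√(n + 1 : ℝ) * √(n + 1 + 1 : ℝ)) * v (n + 2) -
        β * (s / √(n + 1 : ℝ) ^ 2) * v (n + 1) +
          (n + 1 / 2) / (√(n : ℝ) * √(n + 1 : ℝ)) * v n) := by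
        field_simp
        rw [hsq]
        ring
    _ = 0 := by rw [hv, mul_zero]

theorem exists_isRecurrenceSolution_isBigO {l m : ℂ} (hmul : l * m = 1) (hne : l ≠ m) (Λ : ℂ) :
    ∃ w : ℕ → ℂ, IsRecurrenceSolution (l + m) Λ w ∧
      (fun n : ℕ ↦ (√n : ℂ) * l ^ (-(n : ℤ)) * w n - 1) =O[atTop] fun n : ℕ ↦ (n : ℝ)⁻¹ := by
  have hl : l ≠ 0 := left_ne_zero_of_mul_eq_one hmul
  have hsqrt := isBigO_inv_pow_comp_succ (isBigO_sqrt_sq_sub_div_sub_one Λ)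
  have hb := (hsqrt.const_mul_left (l + m)).congr_left fun n ↦ mul_sub_one (l + m) _
  obtain ⟨v, hrec, hv⟩ := exists_solution_isBigO_div_pow_sub_one hl hne
    (isBigO_inv_pow_comp_succ isBigO_add_half_div_sqrt_sub_one) hb
    (hmul ▸ isBigO_add_half_div_sqrt_sub_one)
  obtain ⟨w, hw, hsol⟩ := exists_isRecurrenceSolution_of_eventually (w := fun n ↦ v n / √n)
    (β := l + m) (Λ := Λ) <| by
      filter_upwards [hrec, eventually_ne_atTop 0] with n hn hn0
      exact recurrence_div_sqrt hn0 hn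
  refine ⟨w, hsol, hv.congr' ?_ .rfl⟩
  filter_upwards [hw, eventually_ne_atTop 0] with n hn hn0
  have hn' : ((√n : ℝ) : ℂ) ≠ 0 := by
    rw [ofReal_ne_zero]
    positivity
  rw [hn, zpow_neg, zpow_natCast]
  field_simp

theorem exists_norm_le_div_of_isBigO {E : Type*} [SeminormedAddCommGroup E] {f : ℕ → E}
    (hf : f =O[atTop] fun n : ℕ ↦ (n : ℝ)⁻¹) :
    ∃ C : ℝ, 0 < C ∧ ∀ n : ℕ, 1 ≤ n → ‖f n‖ ≤ C / n := by
  obtain ⟨C, hC, h⟩ := bound_of_isBigO_nat_atTop hf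
  refine ⟨C, hC, fun n hn ↦ (h (by positivity)).trans_eq ?_⟩
  rw [norm_inv, Real.norm_natCast, div_eq_mul_inv]

theorem birkhoff_adams_plus_general {α : ℂ} (hα : α ≠ 0) (hα1 : α ^ 2 ≠ 1) (Λ : ℂ) :
    ∃ C : ℝ, 0 < C ∧ ∃ wp wm : ℕ → ℂ,
      IsRecurrenceSolution (2 / α) Λ wp ∧ IsRecurrenceSolution (2 / α) Λ wm ∧
      (∀ n : ℕ, 1 ≤ n →
        ‖(√n : ℂ) * (1 / α + (1 / α ^ 2 - 1) ^ ((1 : ℂ) / 2)) ^ (-(n : ℤ)) * wp n - 1‖ ≤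
          C / n) ∧
      (∀ n : ℕ, 1 ≤ n →
        ‖(√n : ℂ) * (1 / α - (1 / α ^ 2 - 1) ^ ((1 : ℂ) / 2)) ^ (-(n : ℤ)) * wm n - 1‖ ≤
          C / n) := by
  set s : ℂ := (1 / α ^ 2 - 1) ^ ((1 : ℂ) / 2) with hs
  have hs2 : s ^ 2 = 1 / α ^ 2 - 1 := by rw [hs, one_div (2 : ℂ), cpow_ofNat_inv_pow]
  have hs0 : s ≠ 0 := fun h ↦ hα1 <| by
    rw [h] at hs2
    field_simp at hs2
    linear_combination hs2
  have hmul : (1 / α + s) * (1 / α - s) = 1 := by linear_combination -hs2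
  have hne : 1 / α + s ≠ 1 / α - s := fun h ↦ hs0 <| by linear_combination h / 2
  obtain ⟨wp, hp, hp'⟩ := exists_isRecurrenceSolution_isBigO hmul hne Λ
  obtain ⟨wm, hm, hm'⟩ := exists_isRecurrenceSolution_isBigO ((mul_comm _ _).trans hmul) hne.symm Λ
  obtain ⟨Cp, hCp, hp'⟩ := exists_norm_le_div_of_isBigO hp'
  obtain ⟨Cm, -, hm'⟩ := exists_norm_le_div_of_isBigO hm'
  rw [show 1 / α + s + (1 / α - s) = 2 / α by ring] at hp
  rw [show 1 / α - s + (1 / α + s) = 2 / α by ring] at hm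
  exact ⟨max Cp Cm, lt_max_of_lt_left hCp, wp, wm, hp, hm,
    fun n hn ↦ (hp' n hn).trans (by gcongr; exact le_max_left ..),
    fun n hn ↦ (hm' n hn).trans (by gcongr; exact le_max_right ..)⟩

/-- Instance (1.bap) of the Birkhoff–Adams theorem: for `α > 0`, `α ≠ 1` and
`Λ ∈ ℂ \ [0,∞)`, with `λ₊ = 1/α + √(1/α²-1)` and `λ₋ = 1/α - √(1/α²-1)`
(principal branch), the recurrence (1.eq) has, as `n → +∞`, two solutions
with asymptotics `w_n^± = λ_±^n n^{-1/2} (1 + O(n^{-1}))`. -/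
theorem birkhoff_adams_plus (α : ℝ) (hα : 0 < α) (hα1 : α ≠ 1)
    (Λ : ℂ) (hΛ : ∀ t : ℝ, 0 ≤ t → Λ ≠ (t : ℂ)) :
    ∃ C : ℝ, 0 < C ∧ ∃ wp wm : ℕ → ℂ,
      (∀ n : ℕ, 1 ≤ n →
        ((n : ℂ) + 1 / 2) * wp (n + 1)
          - (2 / (α : ℂ)) * (((n : ℂ) ^ 2 - Λ) ^ ((1 : ℂ) / 2)) * wp n
          + ((n : ℂ) - 1 / 2) * wp (n - 1) = 0) ∧
      (∀ n : ℕ, 1 ≤ n →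
        ((n : ℂ) + 1 / 2) * wm (n + 1)
          - (2 / (α : ℂ)) * (((n : ℂ) ^ 2 - Λ) ^ ((1 : ℂ) / 2)) * wm n
          + ((n : ℂ) - 1 / 2) * wm (n - 1) = 0) ∧
      (∀ n : ℕ, 1 ≤ n →
        ‖(Real.sqrt n : ℂ) * (1 / (α : ℂ) + ((1 / (α : ℂ) ^ 2 - 1) ^ ((1 : ℂ) / 2))) ^ (-(n : ℤ))
            * wp n - 1‖ ≤ C / n) ∧
      (∀ n : ℕ, 1 ≤ n →
        ‖(Real.sqrt n : ℂ) * (1 / (α : ℂ) - ((1 / (α : ℂ) ^ 2 - 1) ^ ((1 : ℂ) / 2))) ^ (-(n : ℤ))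
            * wm n - 1‖ ≤ C / n) := by
  exact birkhoff_adams_plus_general (mod_cast hα.ne')
    (mod_cast fun h ↦ hα1 ((pow_eq_one_iff_of_nonneg hα.le two_ne_zero).1 h)) Λ
end

section
/- Let α > 0 with α ≠ 1, and let Λ ∈ ℂ \ [0,∞). Let μ₊ = −1/α + √(1/α² − 1) and μ₋ = −1/α − √(1/α² − 1) (principal branch of the square root). Then there exist a constant C > 0 and two sequences w⁺, w⁻ : {…,−2,−1,0} → ℂ, each satisfying (n+1/2)·w_{n+1} − (2/α)·√(n²−Λ)·w_n + (n−1/2)·w_{n−1} = 0 for all n ≤ −1, such that | |n|^{1/2} · μ₊^{−n} · w⁺_n − 1| ≤ C/|n| and | |n|^{1/2} · μ₋^{−n} · w⁻_n − 1| ≤ C/|n| for all n ≤ −1. -/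
open Complex

/-!
Write `w (-m) = v m = x m / √m`. The factor `1 / √m` absorbs the `1 / m` terms of the recurrence, so
that `x (m + 2) - p m * x (m + 1) + r m * x m = 0` with `p m = ρ + σ + O(m⁻²)` and
`r m = ρ * σ + O(m⁻²)`, where `ρ` and `σ` are `μ₊` and `μ₋` in either order and `μ₊ * μ₋ = 1`. For
`x m = ρ ^ m * u m` this becomes, with `q = σ / ρ ≠ 1` and `a, b = O(m⁻²)`,
`(u (m + 2) - u (m + 1)) - q * (u (m + 1) - u m) = a m * u (m + 1) + b m * u m`.
The left-hand side has a bounded Green's function, decaying suitably towards the past. Once `a` and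
`b` are replaced by `0` on a long initial segment, the equation for a bounded `u` tending to `1` is
therefore solved by a Neumann series, and `u = 1 + O(m⁻¹)`. The solution so obtained for large `m`
continues down to `m = 0` because the coefficient `m + 1 / 2` of `v m` never vanishes.
-/

open Filter Asymptotics
open scoped Topology BoundedContinuousFunction

section GreenKernel

variable {𝕜 : Type*} [NormedField 𝕜]

/-- A discrete Green's function of the difference operator
`u ↦ (u (n + 2) - u (n + 1)) - q * (u (n + 1) - u n)` on sequences `ℕ → 𝕜`. The value `G j i` is the
response at `j` to a unit source at `i`; the bounds by `M` make a source of size `O(n⁻²)` produce a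
response of size `O(n⁻¹)`. -/
structure IsGreenKernel (q : 𝕜) (G : ℕ → ℕ → 𝕜) (M : ℝ) : Prop where
  recurrence : ∀ i j,
    G (j + 2) i - G (j + 1) i - q * (G (j + 1) i - G j i) = if i = j then 1 else 0
  norm_le : ∀ j i, ‖G j i‖ ≤ M
  sum_le : ∀ j, ∑ i ∈ Finset.range j, ((j - i : ℕ) : ℝ) * ‖G j i‖ ≤ M

theorem sum_sub_mul_pow_le {r : ℝ} (hr0 : 0 ≤ r) (hr1 : r < 1) (j : ℕ) :
    ∑ i ∈ Finset.range j, ((j - i : ℕ) : ℝ) * r ^ (j - (i + 1)) ≤ 1 / (1 - r) ^ 2 := by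
  have hsum : HasSum (fun k : ℕ => ((k + 1 : ℕ) : ℝ) * r ^ k) (1 / (1 - r) ^ 2) := by
    simpa using hasSum_choose_mul_geometric_of_norm_lt_one 1
      (r := r) (by rwa [Real.norm_of_nonneg hr0])
  calc
    _ = ∑ i ∈ Finset.range j, ((j - 1 - i + 1 : ℕ) : ℝ) * r ^ (j - 1 - i) := by
      refine Finset.sum_congr rfl fun i hi => ?_
      have hij := Finset.mem_range.1 hi
      rw [show j - (i + 1) = j - 1 - i by lia, show j - i = j - 1 - i + 1 by lia]
    _ = ∑ k ∈ Finset.range j, ((k + 1 : ℕ) : ℝ) * r ^ k :=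
      Finset.sum_range_reflect (fun k => ((k + 1 : ℕ) : ℝ) * r ^ k) j
    _ ≤ _ := sum_le_hasSum _ (fun k _ => by positivity) hsum

theorem isGreenKernel_of_norm_lt_one {q : 𝕜} (hq : ‖q‖ < 1) :
    IsGreenKernel q (fun j i => (q - 1)⁻¹ * q ^ (j - (i + 1)))
      (‖(q - 1)⁻¹‖ * (1 / (1 - ‖q‖) ^ 2)) where
  recurrence i j := by
    have hq1 : q - 1 ≠ 0 := sub_ne_zero.2 fun h => by simp [h] at hq
    rcases lt_trichotomy i j with hij | rfl | hij
    · obtain ⟨k, rfl⟩ := Nat.exists_eq_add_of_lt hij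
      rw [if_neg hij.ne, show i + k + 1 + 2 - (i + 1) = k + 2 by lia,
        show i + k + 1 + 1 - (i + 1) = k + 1 by lia, show i + k + 1 - (i + 1) = k by lia]
      ring
    · rw [if_pos rfl, show i + 2 - (i + 1) = 1 by lia, show i + 1 - (i + 1) = 0 by lia,
        show i - (i + 1) = 0 by lia]
      field_simp
      ring
    · rw [if_neg hij.ne', show j + 2 - (i + 1) = 0 by lia, show j + 1 - (i + 1) = 0 by lia,
        show j - (i + 1) = 0 by lia]
      ring
  norm_le j i := by
    have hone : 1 ≤ 1 / (1 - ‖q‖) ^ 2 :=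
      one_le_one_div (by nlinarith) (pow_le_one₀ (by linarith) (by linarith [norm_nonneg q]))
    rw [norm_mul, norm_pow]
    gcongr
    exact (pow_le_one₀ (norm_nonneg q) hq.le).trans hone
  sum_le j := by
    calc
      _ = ‖(q - 1)⁻¹‖ *
          ∑ i ∈ Finset.range j, ((j - i : ℕ) : ℝ) * ‖q‖ ^ (j - (i + 1)) := by
        simp only [norm_mul, norm_pow, Finset.mul_sum, mul_left_comm]
      _ ≤ _ := by
        gcongr
        exact sum_sub_mul_pow_le (norm_nonneg q) hq j

theorem isGreenKernel_of_one_le_norm {q : 𝕜} (hq : 1 ≤ ‖q‖) (hq1 : q ≠ 1) :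
    IsGreenKernel q (fun j i => (q - 1)⁻¹ * (1 - q⁻¹ ^ (i + 1 - j))) (‖(q - 1)⁻¹‖ * 2) where
  recurrence i j := by
    have hq0 : q ≠ 0 := norm_pos_iff.1 (one_pos.trans_le hq)
    have hsub : q - 1 ≠ 0 := sub_ne_zero.2 hq1
    rcases lt_trichotomy i j with hij | rfl | hij
    · rw [if_neg hij.ne, show i + 1 - (j + 2) = 0 by lia, show i + 1 - (j + 1) = 0 by lia,
        show i + 1 - j = 0 by lia]
      ring
    · rw [if_pos rfl, show i + 1 - (i + 2) = 0 by lia, show i + 1 - (i + 1) = 0 by lia,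
        show i + 1 - i = 1 by lia]
      field_simp
      ring
    · obtain ⟨k, rfl⟩ := Nat.exists_eq_add_of_lt hij
      rw [if_neg hij.ne', show j + k + 1 + 1 - (j + 2) = k by lia,
        show j + k + 1 + 1 - (j + 1) = k + 1 by lia, show j + k + 1 + 1 - j = k + 2 by lia]
      linear_combination (q - 1)⁻¹ * q⁻¹ ^ k * (1 - q⁻¹) * mul_inv_cancel₀ hq0
  norm_le j i := by
    have hpow : ‖q⁻¹ ^ (i + 1 - j)‖ ≤ 1 := by
      rw [norm_pow, norm_inv]
      exact pow_le_one₀ (by positivity) (inv_le_one_of_one_le₀ hq)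
    rw [norm_mul]
    gcongr
    refine (norm_sub_le _ _).trans ?_
    rw [norm_one]
    linarith
  sum_le j := by
    rw [Finset.sum_eq_zero]
    · positivity
    · intro i hi
      have hij := Finset.mem_range.1 hi
      simp [show i + 1 - j = 0 by lia]

theorem exists_isGreenKernel {q : 𝕜} (hq : q ≠ 1) :
    ∃ G M, IsGreenKernel q G M := by
  rcases lt_or_ge ‖q‖ 1 with h | h
  · exact ⟨_, _, isGreenKernel_of_norm_lt_one h⟩
  · exact ⟨_, _, isGreenKernel_of_one_le_norm h hq⟩

theorem exists_norm_le_div_succ_sq_of_isBigO {E : Type*} [Norm E] {f : ℕ → E}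
    (hf : f =O[atTop] fun n : ℕ => ((n : ℝ) ^ 2)⁻¹) :
    ∃ K, 0 < K ∧ ∀ n : ℕ, ‖f n‖ ≤ K * (((n : ℝ) + 1) ^ 2)⁻¹ := by
  have hshift : (fun n : ℕ => ((n : ℝ) ^ 2)⁻¹) =O[atTop] fun n : ℕ => (((n : ℝ) + 1) ^ 2)⁻¹ := by
    refine IsBigO.of_bound 4 ?_
    filter_upwards [eventually_ge_atTop 1] with n hn
    have hn' : (1 : ℝ) ≤ n := mod_cast hn
    rw [Real.norm_of_nonneg (by positivity), Real.norm_of_nonneg (by positivity),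
      ← div_eq_mul_inv, inv_le_comm₀ (by positivity) (by positivity), inv_div,
      div_le_iff₀ (by norm_num)]
    nlinarith
  obtain ⟨K, hK, hbound⟩ := bound_of_isBigO_nat_atTop (hf.trans hshift)
  refine ⟨K, hK, fun n => (hbound (by positivity)).trans_eq ?_⟩
  rw [Real.norm_of_nonneg (by positivity)]

namespace IsGreenKernel

variable {q : 𝕜} {G : ℕ → ℕ → 𝕜} {M : ℝ} {f s : ℕ → 𝕜}

theorem recurrence_of_hasSum (hG : IsGreenKernel q G M)
    (hs : ∀ j, HasSum (fun i => f i * G j i) (s j)) (j : ℕ) :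
    s (j + 2) - s (j + 1) - q * (s (j + 1) - s j) = f j := by
  have hcomb := ((hs (j + 2)).sub (hs (j + 1))).sub (((hs (j + 1)).sub (hs j)).mul_left q)
  refine hcomb.unique ((hasSum_ite_eq j (f j)).congr_fun fun i => ?_)
  calc
    _ = f i * (G (j + 2) i - G (j + 1) i - q * (G (j + 1) i - G j i)) := by ring
    _ = if i = j then f j else 0 := by
      rw [hG.recurrence]
      split_ifs with hij <;> simp [hij]

theorem sum_range_mul_norm_le (hG : IsGreenKernel q G M) {j : ℕ} (hj : 1 ≤ j) :
    ∑ i ∈ Finset.range j, (((i : ℝ) + 1) ^ 2)⁻¹ * ‖G j i‖ ≤ M * (j : ℝ)⁻¹ := by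
  have hj0 : (0 : ℝ) < j := mod_cast hj
  rw [← div_eq_mul_inv, le_div_iff₀ hj0, Finset.sum_mul]
  refine (Finset.sum_le_sum fun i hi => ?_).trans (hG.sum_le j)
  have hij : (i : ℝ) + 1 ≤ j := mod_cast Finset.mem_range.1 hi
  rw [Nat.cast_sub (Finset.mem_range.1 hi).le, mul_right_comm]
  gcongr
  rw [inv_mul_le_iff₀ (by positivity)]
  nlinarith [mul_nonneg (Nat.cast_nonneg (α := ℝ) i) (sub_nonneg.2 hij),
    mul_nonneg (Nat.cast_nonneg (α := ℝ) i) (Nat.cast_nonneg (α := ℝ) i)]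

theorem sum_Ico_mul_norm_le (hG : IsGreenKernel q G M) {j : ℕ} (hj : 1 ≤ j)
    (n : ℕ) : ∑ i ∈ Finset.Ico j n, (((i : ℝ) + 1) ^ 2)⁻¹ * ‖G j i‖ ≤ 2 * M * (j : ℝ)⁻¹ := by
  have hM : 0 ≤ M := (norm_nonneg _).trans (hG.norm_le 0 0)
  calc
    _ ≤ ∑ i ∈ Finset.Ico j n, ((i : ℝ) ^ 2)⁻¹ * M := by
      refine Finset.sum_le_sum fun i hi => ?_
      have hi0 : (0 : ℝ) < i := mod_cast hj.trans (Finset.mem_Ico.1 hi).1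
      gcongr
      · linarith
      · exact hG.norm_le j i
    _ = (∑ i ∈ Finset.Ioo (j - 1) n, ((i : ℝ) ^ 2)⁻¹) * M := by
      rw [Finset.sum_mul]
      congr 1
      ext i
      simp only [Finset.mem_Ico, Finset.mem_Ioo]
      lia
    _ ≤ 2 / (((j - 1 : ℕ) : ℝ) + 1) * M := by
      gcongr
      exact sum_Ioo_inv_sq_le _ _
    _ = _ := by
      rw [Nat.cast_sub hj]
      push_cast
      ring

theorem isBigO_inv_of_hasSum (hG : IsGreenKernel q G M)
    (hf : f =O[atTop] fun n : ℕ => ((n : ℝ) ^ 2)⁻¹)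
    (hs : ∀ j, HasSum (fun i => f i * G j i) (s j)) :
    s =O[atTop] fun n : ℕ => (n : ℝ)⁻¹ := by
  obtain ⟨K, hK, hfK⟩ := exists_norm_le_div_succ_sq_of_isBigO hf
  refine IsBigO.of_bound (K * (3 * M)) ?_
  filter_upwards [eventually_ge_atTop 1] with j hj
  refine le_of_tendsto (hs j).tendsto_sum_nat.norm ?_
  filter_upwards [eventually_ge_atTop j] with n hn
  calc
    _ ≤ ∑ i ∈ Finset.range n, K * ((((i : ℝ) + 1) ^ 2)⁻¹ * ‖G j i‖) := by
      refine norm_sum_le_of_le _ fun i _ => ?_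
      rw [norm_mul, ← mul_assoc]
      gcongr
      exact hfK i
    _ = K * (∑ i ∈ Finset.range j, (((i : ℝ) + 1) ^ 2)⁻¹ * ‖G j i‖ +
          ∑ i ∈ Finset.Ico j n, (((i : ℝ) + 1) ^ 2)⁻¹ * ‖G j i‖) := by
      rw [← Finset.mul_sum, Finset.sum_range_add_sum_Ico _ hn]
    _ ≤ K * (M * (j : ℝ)⁻¹ + 2 * M * (j : ℝ)⁻¹) := by
      gcongr
      · exact hG.sum_range_mul_norm_le hj
      · exact hG.sum_Ico_mul_norm_le hj n
    _ = _ := by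
      rw [Real.norm_of_nonneg (by positivity)]
      ring

end IsGreenKernel

end GreenKernel

theorem exists_hasSum_apply_sub {𝕜 ι E : Type*} [NontriviallyNormedField 𝕜]
    [NormedAddCommGroup E] [NormedSpace 𝕜 E] [CompleteSpace E] {T : ι → E →L[𝕜] E}
    (hT : Summable fun i => ‖T i‖) (hT1 : ∑' i, ‖T i‖ < 1) (v : E) :
    ∃ u, HasSum (fun i => T i u) (u - v) := by
  obtain ⟨S, hS⟩ : IsUnit (1 - ∑' i, T i) :=
    (Units.oneSub _ ((norm_tsum_le_tsum_norm hT).trans_lt hT1)).isUnit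
  have hv : (1 - ∑' i, T i) (S⁻¹.val v) = v := by
    rw [← hS, ← mul_apply_eq_comp, S.mul_inv, one_apply_eq_self]
  refine ⟨S⁻¹.val v, ?_⟩
  generalize S⁻¹.val v = u at hv ⊢
  have hu : u - v = (∑' i, T i) u := by
    rw [← hv]
    simp
  rw [hu]
  exact (ContinuousLinearMap.apply 𝕜 E u).hasSum hT.of_norm.hasSum

section Perturbation

variable {𝕜 : Type*} [NontriviallyNormedField 𝕜] [CompleteSpace 𝕜] {q : 𝕜} {a b : ℕ → 𝕜}

theorem IsGreenKernel.exists_hasSum {G : ℕ → ℕ → 𝕜} {M : ℝ} (hG : IsGreenKernel q G M)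
    (hab : Summable fun i => ‖a i‖ + ‖b i‖) (hsmall : (∑' i, (‖a i‖ + ‖b i‖)) * M < 1) :
    ∃ u : ℕ →ᵇ 𝕜, ∀ j, HasSum (fun i => (a i * u (i + 1) + b i * u i) * G j i) (u j - 1) := by
  let column (i : ℕ) : ℕ →ᵇ 𝕜 :=
    BoundedContinuousFunction.ofNormedAddCommGroupDiscrete (G · i) M (hG.norm_le · i)
  let evalAt (i : ℕ) : (ℕ →ᵇ 𝕜) →L[𝕜] 𝕜 := BoundedContinuousFunction.evalCLM 𝕜 i
  let T (i : ℕ) : (ℕ →ᵇ 𝕜) →L[𝕜] (ℕ →ᵇ 𝕜) :=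
    (a i • evalAt (i + 1) + b i • evalAt i).smulRight (column i)
  have hM : 0 ≤ M := (norm_nonneg _).trans (hG.norm_le 0 0)
  have hT_apply (i j : ℕ) (u : ℕ →ᵇ 𝕜) : T i u j = (a i * u (i + 1) + b i * u i) * G j i := rfl
  have hT_norm (i : ℕ) : ‖T i‖ ≤ (‖a i‖ + ‖b i‖) * M := by
    refine (T i).opNorm_le_bound (by positivity) fun u => ?_
    refine (BoundedContinuousFunction.norm_le (by positivity)).2 fun j => ?_
    calc
      ‖T i u j‖ ≤ (‖a i‖ * ‖u‖ + ‖b i‖ * ‖u‖) * M := by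
        rw [hT_apply, norm_mul]
        gcongr
        · refine norm_add_le_of_le ?_ ?_ <;> rw [norm_mul] <;> gcongr <;> exact u.norm_coe_le_norm _
        · exact hG.norm_le j i
      _ = _ := by ring
  have hT_summable : Summable fun i => ‖T i‖ :=
    (hab.mul_right M).of_nonneg_of_le (fun i => norm_nonneg _) hT_norm
  have hT_lt : ∑' i, ‖T i‖ < 1 := by
    refine (hT_summable.tsum_le_tsum hT_norm (hab.mul_right M)).trans_lt ?_
    rwa [tsum_mul_right]
  obtain ⟨u, hu⟩ := exists_hasSum_apply_sub hT_summable hT_lt (1 : ℕ →ᵇ 𝕜)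
  exact ⟨u, fun j => (evalAt j).hasSum hu⟩

theorem tendsto_tsum_indicator_Ici {E : Type*} [AddCommGroup E] [TopologicalSpace E]
    [IsTopologicalAddGroup E] [T2Space E] (f : ℕ → E) :
    Tendsto (fun N => ∑' i, (Set.Ici N).indicator f i) atTop (𝓝 0) := by
  refine (tendsto_sum_nat_add f).congr fun N => ?_
  have hsupp : Function.support ((Set.Ici N).indicator f) ⊆ Set.range (· + N) :=
    Set.support_indicator_subset.trans fun n hn => ⟨n - N, Nat.sub_add_cancel hn⟩
  rw [← (add_left_injective N).tsum_eq hsupp]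
  simp

theorem exists_isBigO_sub_one_of_perturbation (hq : q ≠ 1)
    (ha : a =O[atTop] fun n : ℕ => ((n : ℝ) ^ 2)⁻¹)
    (hb : b =O[atTop] fun n : ℕ => ((n : ℝ) ^ 2)⁻¹) :
    ∃ u : ℕ → 𝕜,
      (∀ᶠ n in atTop,
        u (n + 2) - u (n + 1) - q * (u (n + 1) - u n) = a n * u (n + 1) + b n * u n) ∧
      (fun n => u n - 1) =O[atTop] fun n : ℕ => (n : ℝ)⁻¹ := by
  obtain ⟨G, M, hG⟩ := exists_isGreenKernel hq
  have hsq : Summable fun n : ℕ => ((n : ℝ) ^ 2)⁻¹ := Real.summable_nat_pow_inv.2 one_lt_two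
  have hab : Summable fun n => ‖a n‖ + ‖b n‖ :=
    (summable_of_isBigO_nat hsq ha.norm_left).add (summable_of_isBigO_nat hsq hb.norm_left)
  obtain ⟨N, hN⟩ : ∃ N : ℕ, (∑' i, (Set.Ici N).indicator (fun n => ‖a n‖ + ‖b n‖) i) * M < 1 := by
    have hlim := (tendsto_tsum_indicator_Ici fun n => ‖a n‖ + ‖b n‖).mul_const M
    rw [zero_mul] at hlim
    exact (hlim.eventually_lt_const one_pos).exists
  let a' := (Set.Ici N).indicator a
  let b' := (Set.Ici N).indicator b
  have ha' : a =ᶠ[atTop] a' := by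
    filter_upwards [Ici_mem_atTop N] with n hn using (Set.indicator_of_mem hn a).symm
  have hb' : b =ᶠ[atTop] b' := by
    filter_upwards [Ici_mem_atTop N] with n hn using (Set.indicator_of_mem hn b).symm
  have hab' : (fun n => ‖a' n‖ + ‖b' n‖) = (Set.Ici N).indicator fun n => ‖a n‖ + ‖b n‖ := by
    rw [Set.indicator_add]
    simp only [a', b', norm_indicator_eq_indicator_norm]
  obtain ⟨u, hu⟩ := hG.exists_hasSum (a := a') (b := b') (hab' ▸ hab.indicator _)
    (by rwa [hab'])
  have hbdd (k : ℕ) : (fun n => u (n + k)) =O[atTop] fun _ : ℕ => (1 : ℝ) :=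
    .of_bound ‖u‖ (.of_forall fun n => by simpa using u.norm_coe_le_norm (n + k))
  have hsource : (fun n => a' n * u (n + 1) + b' n * u n) =O[atTop]
      fun n : ℕ => ((n : ℝ) ^ 2)⁻¹ := by
    simpa using ((ha.congr' ha' .rfl).mul (hbdd 1)).add ((hb.congr' hb' .rfl).mul (hbdd 0))
  refine ⟨u, ?_, hG.isBigO_inv_of_hasSum hsource hu⟩
  filter_upwards [ha', hb'] with n han hbn
  rw [han, hbn, ← hG.recurrence_of_hasSum hu n]
  ring

theorem exists_solution_isBigO_div_pow_sub_one_s4 {ρ σ : 𝕜} (hρ : ρ ≠ 0) (hρσ : ρ ≠ σ)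
    {p r : ℕ → 𝕜} (hp : (fun n => p n - (ρ + σ)) =O[atTop] fun n : ℕ => ((n : ℝ) ^ 2)⁻¹)
    (hr : (fun n => r n - ρ * σ) =O[atTop] fun n : ℕ => ((n : ℝ) ^ 2)⁻¹) :
    ∃ x : ℕ → 𝕜,
      (∀ᶠ n in atTop, x (n + 2) - p n * x (n + 1) + r n * x n = 0) ∧
      (fun n => x n / ρ ^ n - 1) =O[atTop] fun n : ℕ => (n : ℝ)⁻¹ := by
  have hq : σ / ρ ≠ 1 := fun h => hρσ ((div_eq_one_iff_eq hρ).1 h).symm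
  obtain ⟨u, hu_rec, hu_asymp⟩ := exists_isBigO_sub_one_of_perturbation hq
    (hp.const_mul_left ρ⁻¹) (hr.const_mul_left (-(ρ ^ 2)⁻¹))
  refine ⟨fun n => ρ ^ n * u n, ?_, ?_⟩
  · filter_upwards [hu_rec] with n hn
    field_simp at hn
    linear_combination ρ ^ n * hn
  · simpa [mul_div_cancel_left₀, hρ] using hu_asymp

end Perturbation

theorem exists_eventuallyEq_forall_recurrence_s4 {K : Type*} [Field K] {p q r v : ℕ → K}
    (hr : ∀ n, r n ≠ 0)
    (hv : ∀ᶠ n in atTop, p n * v (n + 2) + q n * v (n + 1) + r n * v n = 0) :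
    ∃ w : ℕ → K, w =ᶠ[atTop] v ∧ ∀ n, p n * w (n + 2) + q n * w (n + 1) + r n * w n = 0 := by
  obtain ⟨N, hN⟩ := eventually_atTop.1 hv
  clear hv
  induction N generalizing v with
  | zero => exact ⟨v, .rfl, fun n => hN n n.zero_le⟩
  | succ N ih =>
    let v' := Function.update v N (-(p N * v (N + 2) + q N * v (N + 1)) / r N)
    have hv' (n : ℕ) (hn : N < n) : v' n = v n := Function.update_of_ne hn.ne' _ _
    obtain ⟨w, hwv', hw⟩ := ih (v := v') fun n hn => by
      rcases hn.eq_or_lt with rfl | hlt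
      · rw [hv' _ (by lia), hv' _ (by lia), show v' N = _ from Function.update_self ..,
          mul_div_cancel₀ _ (hr N)]
        ring
      · rw [hv' _ (by lia), hv' _ (by lia), hv' _ hlt]
        exact hN n hlt
    refine ⟨w, hwv'.trans ?_, hw⟩
    filter_upwards [eventually_gt_atTop N] with n hn using hv' n hn

theorem isBigO_sub_one_of_sq_sub_one {ι E : Type*} [Norm E] {l : Filter ι} {z : ι → ℂ}
    {g : ι → E} (hre : ∀ᶠ i in l, 0 ≤ (z i).re) (hz : (fun i => z i ^ 2 - 1) =O[l] g) :
    (fun i => z i - 1) =O[l] g := by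
  refine .trans (.of_bound 1 ?_) hz
  filter_upwards [hre] with i hi
  have hone : 1 ≤ ‖z i + 1‖ := by
    refine le_trans ?_ (re_le_norm _)
    rw [add_re, one_re]
    linarith
  calc
    ‖z i - 1‖ ≤ ‖z i - 1‖ * ‖z i + 1‖ := le_mul_of_one_le_right (norm_nonneg _) hone
    _ = 1 * ‖z i ^ 2 - 1‖ := by
      rw [← norm_mul, one_mul]
      congr 1
      ring

/-- The normalised coefficient of the middle term of the recurrence (1.eq), read along `m = -n`: it
multiplies `-(μ₊ + μ₋) * x (m + 1)` after the substitution `v m = x m / √m`. -/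
noncomputable def middleCoeff (Λ : ℂ) (m : ℕ) : ℂ :=
  ((√(m + 2 : ℝ) / (√(m + 1 : ℝ) * (m + 3 / 2)) : ℝ) : ℂ) *
    (((m : ℂ) + 1) ^ 2 - Λ) ^ ((1 : ℂ) / 2)

/-- The normalised coefficient of the last term of the recurrence (1.eq), read along `m = -n`: it
multiplies `x m` after the substitution `v m = x m / √m`. At `m = 0` it has the junk value `0`. -/
noncomputable def lastCoeff (m : ℕ) : ℝ :=
  (m + 1 / 2) * √(m + 2 : ℝ) / (√(m : ℝ) * (m + 3 / 2))

theorem sq_cpow_one_half (z : ℂ) : (z ^ ((1 : ℂ) / 2)) ^ 2 = z := by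
  rw [one_div]
  exact cpow_ofNat_inv_pow z 2

theorem re_cpow_one_half_nonneg (z : ℂ) : 0 ≤ (z ^ ((1 : ℂ) / 2)).re := by
  rw [one_div, cpow_inv_two_re]
  exact Real.sqrt_nonneg _

theorem re_middleCoeff_nonneg (Λ : ℂ) (m : ℕ) : 0 ≤ (middleCoeff Λ m).re := by
  rw [middleCoeff, re_ofReal_mul]
  exact mul_nonneg (by positivity) (re_cpow_one_half_nonneg _)

theorem middleCoeff_sq_sub_one (Λ : ℂ) (m : ℕ) :
    middleCoeff Λ m ^ 2 - 1 = -(1 / 4 + Λ * ((m + 2) / (m + 1))) / ((m : ℂ) + 3 / 2) ^ 2 := by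
  have hm1 : (m : ℂ) + 1 ≠ 0 := Nat.cast_add_one_ne_zero m
  have hm3 : (m : ℂ) * 2 + 3 ≠ 0 := mod_cast (by lia : m * 2 + 3 ≠ 0)
  rw [middleCoeff, mul_pow, sq_cpow_one_half, ← ofReal_pow, div_pow, mul_pow,
    Real.sq_sqrt (by positivity), Real.sq_sqrt (by positivity)]
  push_cast
  field_simp
  ring

theorem lastCoeff_sq_sub_one {m : ℕ} (hm : m ≠ 0) :
    lastCoeff m ^ 2 - 1 = (1 / (2 * m)) / ((m : ℝ) + 3 / 2) ^ 2 := by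
  rw [lastCoeff, div_pow, mul_pow, mul_pow, Real.sq_sqrt (by positivity),
    Real.sq_sqrt (by positivity)]
  field_simp
  ring

theorem isBigO_div_add_three_halves_sq {f : ℕ → ℂ} (hf : f =O[atTop] fun _ => (1 : ℝ)) :
    (fun m : ℕ => f m / ((m : ℂ) + 3 / 2) ^ 2) =O[atTop] fun m : ℕ => ((m : ℝ) ^ 2)⁻¹ := by
  have hinv : (fun m : ℕ => (((m : ℂ) + 3 / 2) ^ 2)⁻¹) =O[atTop]
      fun m : ℕ => ((m : ℝ) ^ 2)⁻¹ := by
    refine .of_bound 1 ?_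
    filter_upwards [eventually_gt_atTop 0] with m hm
    have hnorm : (m : ℝ) ≤ ‖(m : ℂ) + 3 / 2‖ := by
      refine le_trans ?_ (re_le_norm _)
      norm_num
    rw [norm_inv, norm_pow, one_mul, Real.norm_of_nonneg (by positivity)]
    gcongr
  simpa [div_eq_mul_inv] using hf.mul hinv

theorem middleCoeff_sub_one_isBigO (Λ : ℂ) :
    (fun m => middleCoeff Λ m - 1) =O[atTop] fun m : ℕ => ((m : ℝ) ^ 2)⁻¹ := by
  refine isBigO_sub_one_of_sq_sub_one (.of_forall (re_middleCoeff_nonneg Λ)) ?_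
  simp_rw [middleCoeff_sq_sub_one]
  refine isBigO_div_add_three_halves_sq (.of_bound (1 / 4 + ‖Λ‖ * 2) (.of_forall fun m => ?_))
  have hratio : ‖((m : ℂ) + 2) / (m + 1)‖ ≤ 2 := by
    rw [show ((m : ℂ) + 2) / (m + 1) = (((m : ℝ) + 2) / (m + 1) : ℝ) by push_cast; rfl,
      norm_real, Real.norm_of_nonneg (by positivity), div_le_iff₀ (by positivity)]
    linarith [Nat.cast_nonneg (α := ℝ) m]
  rw [norm_neg, norm_one, mul_one]
  refine norm_add_le_of_le (by norm_num) ?_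
  rw [norm_mul]
  gcongr

theorem lastCoeff_sub_one_isBigO :
    (fun m => (lastCoeff m : ℂ) - 1) =O[atTop] fun m : ℕ => ((m : ℝ) ^ 2)⁻¹ := by
  refine isBigO_sub_one_of_sq_sub_one (.of_forall fun m => ?_) ?_
  · rw [ofReal_re, lastCoeff]
    positivity
  have hbdd : (fun m : ℕ => ((1 / (2 * m) : ℝ) : ℂ)) =O[atTop] fun _ => (1 : ℝ) := by
    refine .of_bound 1 ?_
    filter_upwards [eventually_gt_atTop 0] with m hm
    have hm' : (1 : ℝ) ≤ m := mod_cast hm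
    rw [norm_real, Real.norm_of_nonneg (by positivity), norm_one, one_mul,
      div_le_one (by positivity)]
    linarith
  refine (isBigO_div_add_three_halves_sq hbdd).congr' ?_ .rfl
  filter_upwards [eventually_ne_atTop 0] with m hm
  have hsq := congrArg ((↑) : ℝ → ℂ) (lastCoeff_sq_sub_one hm)
  push_cast at hsq ⊢
  exact hsq.symm

theorem recurrence_div_sqrt_eq (Λ τ : ℂ) (x : ℕ → ℂ) {m : ℕ} (hm : m ≠ 0) :
    ((m : ℂ) + 3 / 2) * (x (m + 2) / √((m + 2 : ℕ) : ℝ)) +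
        -τ * (((m : ℂ) + 1) ^ 2 - Λ) ^ ((1 : ℂ) / 2) * (x (m + 1) / √((m + 1 : ℕ) : ℝ)) +
        ((m : ℂ) + 1 / 2) * (x m / √(m : ℝ)) =
      ((m : ℂ) + 3 / 2) / √(m + 2 : ℝ) *
        (x (m + 2) - τ * middleCoeff Λ m * x (m + 1) + lastCoeff m * x m) := by
  have hsqrt {t : ℝ} (ht : 0 < t) : (√t : ℂ) ≠ 0 := ofReal_ne_zero.2 (Real.sqrt_pos.2 ht).ne'
  have h0 := hsqrt (t := m) (by positivity)
  have h1 := hsqrt (t := m + 1) (by positivity)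
  have h2 := hsqrt (t := m + 2) (by positivity)
  have h3 : (m : ℂ) * 2 + 3 ≠ 0 := mod_cast (by lia : m * 2 + 3 ≠ 0)
  rw [middleCoeff, lastCoeff]
  push_cast
  field_simp
  ring

theorem exists_nat_solution_isBigO {ρ σ : ℂ} (hmul : ρ * σ = 1) (hne : ρ ≠ σ) (Λ : ℂ) :
    ∃ v : ℕ → ℂ,
      (∀ m : ℕ, ((m : ℂ) + 3 / 2) * v (m + 2) +
        -(ρ + σ) * (((m : ℂ) + 1) ^ 2 - Λ) ^ ((1 : ℂ) / 2) * v (m + 1) +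
        ((m : ℂ) + 1 / 2) * v m = 0) ∧
      (fun m : ℕ => (√(m : ℝ) : ℂ) * σ ^ m * v m - 1) =O[atTop] fun m : ℕ => (m : ℝ)⁻¹ := by
  have hρ : ρ ≠ 0 := left_ne_zero_of_mul_eq_one hmul
  obtain ⟨x, hx_rec, hx_asymp⟩ := exists_solution_isBigO_div_pow_sub_one_s4 hρ hne
    (p := fun m => (ρ + σ) * middleCoeff Λ m) (r := fun m => (lastCoeff m : ℂ))
    (by simpa [mul_sub] using (middleCoeff_sub_one_isBigO Λ).const_mul_left (ρ + σ))
    (by simpa [hmul] using lastCoeff_sub_one_isBigO)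
  have hhalf (m : ℕ) : (m : ℂ) + 1 / 2 ≠ 0 := by
    have hdouble : (m : ℂ) * 2 + 1 ≠ 0 := mod_cast (by lia : m * 2 + 1 ≠ 0)
    exact fun h => hdouble (by linear_combination 2 * h)
  obtain ⟨v, hvx, hv⟩ := exists_eventuallyEq_forall_recurrence_s4 hhalf
    (p := fun m => (m : ℂ) + 3 / 2)
    (q := fun m => -(ρ + σ) * (((m : ℂ) + 1) ^ 2 - Λ) ^ ((1 : ℂ) / 2))
    (v := fun m => x m / √(m : ℝ)) <| by
      filter_upwards [hx_rec, eventually_ne_atTop 0] with m hm hm0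
      rw [recurrence_div_sqrt_eq Λ (ρ + σ) x hm0, hm, mul_zero]
  refine ⟨v, hv, hx_asymp.congr' ?_ .rfl⟩
  filter_upwards [hvx, eventually_gt_atTop 0] with m hvm hm
  have hsqrt : (√(m : ℝ) : ℂ) ≠ 0 := ofReal_ne_zero.2 (Real.sqrt_pos.2 (mod_cast hm)).ne'
  rw [hvm, eq_inv_of_mul_eq_one_right hmul, inv_pow]
  field_simp

theorem exists_int_solution {ρ σ : ℂ} (hmul : ρ * σ = 1) (hne : ρ ≠ σ) (Λ : ℂ) :
    ∃ C : ℝ, 0 < C ∧ ∃ w : ℤ → ℂ,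
      (∀ n : ℤ, n ≤ -1 →
        ((n : ℂ) + 1 / 2) * w (n + 1) + (ρ + σ) * ((n : ℂ) ^ 2 - Λ) ^ ((1 : ℂ) / 2) * w n +
          ((n : ℂ) - 1 / 2) * w (n - 1) = 0) ∧
      (∀ n : ℤ, n ≤ -1 → ‖(√|(n : ℝ)| : ℂ) * σ ^ (-n) * w n - 1‖ ≤ C / |(n : ℝ)|) := by
  obtain ⟨v, hv_rec, hv_asymp⟩ := exists_nat_solution_isBigO hmul hne Λ
  obtain ⟨C, hC, hvC⟩ := bound_of_isBigO_nat_atTop hv_asymp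
  refine ⟨C, hC, fun n => v (-n).toNat, fun n hn => ?_, fun n hn => ?_⟩
  · obtain ⟨m, rfl⟩ : ∃ m : ℕ, n = -((m : ℤ) + 1) := ⟨(-n - 1).toNat, by lia⟩
    simp only [show (-(-((m : ℤ) + 1) + 1)).toNat = m by lia,
      show (-(-((m : ℤ) + 1))).toNat = m + 1 by lia,
      show (-(-((m : ℤ) + 1) - 1)).toNat = m + 2 by lia]
    push_cast
    rw [neg_sq]
    linear_combination -hv_rec m
  · obtain ⟨m, rfl⟩ : ∃ m : ℕ, n = -(m : ℤ) := ⟨(-n).toNat, by lia⟩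
    have hm : (m : ℝ)⁻¹ ≠ 0 := inv_ne_zero (Nat.cast_ne_zero.2 (by lia))
    simpa [div_eq_mul_inv] using hvC hm

theorem birkhoff_adams_minus_general (α : ℂ) (hα : α ≠ 0) (hα1 : α ^ 2 ≠ 1) (Λ : ℂ) :
    ∃ C : ℝ, 0 < C ∧ ∃ wp wm : ℤ → ℂ,
      (∀ n : ℤ, n ≤ -1 →
        ((n : ℂ) + 1 / 2) * wp (n + 1)
          - (2 / α) * (((n : ℂ) ^ 2 - Λ) ^ ((1 : ℂ) / 2)) * wp n
          + ((n : ℂ) - 1 / 2) * wp (n - 1) = 0) ∧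
      (∀ n : ℤ, n ≤ -1 →
        ((n : ℂ) + 1 / 2) * wm (n + 1)
          - (2 / α) * (((n : ℂ) ^ 2 - Λ) ^ ((1 : ℂ) / 2)) * wm n
          + ((n : ℂ) - 1 / 2) * wm (n - 1) = 0) ∧
      (∀ n : ℤ, n ≤ -1 →
        ‖(Real.sqrt |(n : ℝ)| : ℂ) * (-(1 / α) + ((1 / α ^ 2 - 1) ^ ((1 : ℂ) / 2))) ^ (-n)
            * wp n - 1‖ ≤ C / |(n : ℝ)|) ∧
      (∀ n : ℤ, n ≤ -1 →
        ‖(Real.sqrt |(n : ℝ)| : ℂ) * (-(1 / α) - ((1 / α ^ 2 - 1) ^ ((1 : ℂ) / 2))) ^ (-n)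
            * wm n - 1‖ ≤ C / |(n : ℝ)|) := by
  set s := (1 / α ^ 2 - 1) ^ ((1 : ℂ) / 2)
  have hs : s ^ 2 = 1 / α ^ 2 - 1 := sq_cpow_one_half _
  have hs0 : s ≠ 0 := by
    intro h
    rw [h] at hs
    field_simp at hs
    exact hα1 (by linear_combination hs)
  have hmul : (-(1 / α) + s) * (-(1 / α) - s) = 1 := by linear_combination -hs
  have hne : -(1 / α) + s ≠ -(1 / α) - s := fun h => hs0 (by linear_combination h / 2)
  obtain ⟨Cp, hCp, wp, hwp, hwpC⟩ := exists_int_solution ((mul_comm _ _).trans hmul) hne.symm Λ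
  obtain ⟨Cm, hCm, wm, hwm, hwmC⟩ := exists_int_solution hmul hne Λ
  refine ⟨Cp + Cm, by positivity, wp, wm, fun n hn => ?_, fun n hn => ?_, fun n hn => ?_,
    fun n hn => ?_⟩
  · linear_combination hwp n hn
  · linear_combination hwm n hn
  · exact (hwpC n hn).trans (by gcongr; linarith)
  · exact (hwmC n hn).trans (by gcongr; linarith)

/-- Instance (1.bam) of the Birkhoff–Adams theorem: for `α > 0`, `α ≠ 1` and
`Λ ∈ ℂ \ [0,∞)`, with `μ₊ = -1/α + √(1/α²-1)` and `μ₋ = -1/α - √(1/α²-1)`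
(principal branch), the recurrence (1.eq) has, as `n → -∞`, two solutions
with asymptotics `w_n^± = μ_±^n |n|^{-1/2} (1 + O(|n|^{-1}))`. -/
theorem birkhoff_adams_minus (α : ℝ) (hα : 0 < α) (hα1 : α ≠ 1)
    (Λ : ℂ) (hΛ : ∀ t : ℝ, 0 ≤ t → Λ ≠ (t : ℂ)) :
    ∃ C : ℝ, 0 < C ∧ ∃ wp wm : ℤ → ℂ,
      (∀ n : ℤ, n ≤ -1 →
        ((n : ℂ) + 1 / 2) * wp (n + 1)
          - (2 / (α : ℂ)) * (((n : ℂ) ^ 2 - Λ) ^ ((1 : ℂ) / 2)) * wp n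
          + ((n : ℂ) - 1 / 2) * wp (n - 1) = 0) ∧
      (∀ n : ℤ, n ≤ -1 →
        ((n : ℂ) + 1 / 2) * wm (n + 1)
          - (2 / (α : ℂ)) * (((n : ℂ) ^ 2 - Λ) ^ ((1 : ℂ) / 2)) * wm n
          + ((n : ℂ) - 1 / 2) * wm (n - 1) = 0) ∧
      (∀ n : ℤ, n ≤ -1 →
        ‖(Real.sqrt |(n : ℝ)| : ℂ)
            * (-(1 / (α : ℂ)) + ((1 / (α : ℂ) ^ 2 - 1) ^ ((1 : ℂ) / 2))) ^ (-n)
            * wp n - 1‖ ≤ C / |(n : ℝ)|) ∧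
      (∀ n : ℤ, n ≤ -1 →
        ‖(Real.sqrt |(n : ℝ)| : ℂ)
            * (-(1 / (α : ℂ)) - ((1 / (α : ℂ) ^ 2 - 1) ^ ((1 : ℂ) / 2))) ^ (-n)
            * wm n - 1‖ ≤ C / |(n : ℝ)|) := by
  have hα1' : (α : ℂ) ^ 2 ≠ 1 := mod_cast (pow_eq_one_iff_of_nonneg hα.le two_ne_zero).not.2 hα1
  exact birkhoff_adams_minus_general α (mod_cast hα.ne') hα1' Λ
end

section
/- Let α > 1 and δ ∈ (0, 1/2). Then there exists a constant C > 0 such that for all trigonometric polynomials u and ζ on the circle, ∫_0^{2π} |α·cos y − 1|^{−1/2} · |u(y)| · |ζ(y)| dy ≤ C · ‖u‖_{H^{1/2}} · ‖ζ‖_{H^δ}. -/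
open Complex Real MeasureTheory

/-!
Split a trigonometric polynomial into its dyadic frequency blocks. The `k`-th block has at most
`2 ^ (k + 2)` frequencies, so interpolating between Parseval's identity and the trivial sup bound
gives `‖block‖_{L^p} ≤ 2 ^ ((k + 2) (1/2 - 1/p)) ‖block‖_{L²}` (Nikolskii's inequality). When
`s > 1/2 - 1/p`, the decay `‖block‖_{L²} ≤ 2 ^ (-s k) ‖·‖_{H^s}` makes these bounds summable: this
is the subcritical Sobolev embedding `H^s ⊂ L^p`. The zeros of `α cos y - 1` are simple, so
`|α cos y - 1| ^ (-1/2)` lies in `L^r` for every `r < 2`, and Hölder's inequality with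
`1/r + 1/p + 1/q = 1` concludes. For `u ∈ H^s` and `ζ ∈ H^t` such exponents exist when `s` and `t`
are positive with `s + t > 1/2`: one can take `1/p > 1/2 - s` and `1/q > 1/2 - t` with
`1/p + 1/q < 1/2`.
-/

open AddCircle Filter Finset Topology
open scoped ENNReal

section Lp

variable {X E : Type*} [MeasurableSpace X] {μ : Measure X} [NormedAddCommGroup E]
  {p q r : ℝ≥0∞}

lemma eLpNorm_le_eLpNorm_top_rpow_mul {f : X → E} (hf : AEStronglyMeasurable f μ)
    (hq : q ≠ 0) (hqp : q ≤ p) :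
    eLpNorm f p μ ≤
      eLpNorm f ∞ μ ^ (1 - (q / p).toReal) * eLpNorm f q μ ^ (q / p).toReal := by
  obtain rfl | hp := eq_or_ne p ∞
  · simp
  have hq' : q ≠ ∞ := ne_top_of_le_ne_top hp hqp
  obtain rfl | hlt := hqp.eq_or_lt
  · simp [ENNReal.div_self hq hp]
  have hdiv : q / p ≠ ∞ := (ENNReal.div_lt_top hq' hlt.ne_bot).ne
  set θ := (q / p).toReal with hθ
  have hθ0 : 0 < θ := ENNReal.toReal_pos (ENNReal.div_ne_zero.2 ⟨hq, hp⟩) hdiv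
  have hθ1 : 0 < 1 - θ := by
    rw [sub_pos, hθ, ← ENNReal.toReal_one, ENNReal.toReal_lt_toReal hdiv ENNReal.one_ne_top]
    exact ENNReal.div_lt_of_lt_mul (by simpa)
  have hθp : p * ENNReal.ofReal θ = q := by
    rw [hθ, ENNReal.ofReal_toReal hdiv, ENNReal.mul_div_cancel hlt.ne_bot hp]
  have hsplit : (‖f ·‖) = (‖f ·‖ ^ (1 - θ)) • (‖f ·‖ ^ θ) := by
    ext x
    rw [Pi.smul_apply', smul_eq_mul, ← Real.rpow_add_of_nonneg (norm_nonneg _) hθ1.le hθ0.le,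
      sub_add_cancel, Real.rpow_one]
  calc eLpNorm f p μ = eLpNorm ((‖f ·‖ ^ (1 - θ)) • (‖f ·‖ ^ θ)) p μ := by
        rw [← hsplit, eLpNorm_norm]
    _ ≤ eLpNorm (‖f ·‖ ^ (1 - θ)) ∞ μ * eLpNorm (‖f ·‖ ^ θ) p μ :=
        eLpNorm_smul_le_eLpNorm_top_mul_eLpNorm p
          (hf.norm.aemeasurable.pow_const θ).aestronglyMeasurable _
    _ = eLpNorm f ∞ μ ^ (1 - θ) * eLpNorm f q μ ^ θ := by
        rw [eLpNorm_norm_rpow _ hθ0, eLpNorm_norm_rpow _ hθ1, hθp,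
          ENNReal.top_mul (by simpa using hθ1)]

lemma lpNorm_le_lpNorm_top_rpow_mul {f : X → E} (hf : MemLp f ∞ μ) (hfq : MemLp f q μ)
    (hq : q ≠ 0) (hqp : q ≤ p) :
    lpNorm f p μ ≤ lpNorm f ∞ μ ^ (1 - (q / p).toReal) * lpNorm f q μ ^ (q / p).toReal := by
  have hθ : (q / p).toReal ≤ 1 :=
    ENNReal.toReal_le_of_le_ofReal zero_le_one (by simpa using ENNReal.div_le_of_le_mul (by simpa))
  simp only [← toReal_eLpNorm hf.1, ENNReal.toReal_rpow, ← ENNReal.toReal_mul]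
  exact ENNReal.toReal_mono (ENNReal.mul_ne_top
    (ENNReal.rpow_ne_top_of_nonneg (by linarith) hf.eLpNorm_ne_top)
    (ENNReal.rpow_ne_top_of_nonneg (by positivity) hfq.eLpNorm_ne_top))
    (eLpNorm_le_eLpNorm_top_rpow_mul hf.1 hq hqp)

lemma lpNorm_mul_le_lpNorm_mul_lpNorm {R : Type*} [NormedRing R] {f g : X → R}
    (hf : MemLp f p μ) (hg : MemLp g q μ) [ENNReal.HolderTriple p q r] :
    lpNorm (f * g) r μ ≤ lpNorm f p μ * lpNorm g q μ := by
  have hle : eLpNorm (f * g) r μ ≤ eLpNorm f p μ * eLpNorm g q μ := by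
    simpa only [smul_eq_mul] using
      eLpNorm_smul_le_mul_eLpNorm (p := p) (q := q) (r := r) hg.1 hf.1
  rw [← toReal_eLpNorm (hf.1.mul hg.1), ← toReal_eLpNorm hf.1, ← toReal_eLpNorm hg.1,
    ← ENNReal.toReal_mul]
  exact ENNReal.toReal_mono (ENNReal.mul_ne_top hf.eLpNorm_ne_top hg.eLpNorm_ne_top) hle

lemma lpNorm_mul_mul_le {R : Type*} [NormedRing R] {s : ℝ≥0∞}
    (hpqrs : p⁻¹ + q⁻¹ + r⁻¹ = s⁻¹) {f g h : X → R} (hf : MemLp f p μ) (hg : MemLp g q μ)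
    (hh : MemLp h r μ) :
    lpNorm (f * g * h) s μ ≤ lpNorm f p μ * lpNorm g q μ * lpNorm h r μ := by
  have : ENNReal.HolderTriple p q (p⁻¹ + q⁻¹)⁻¹ := .of p q
  have : ENNReal.HolderTriple (p⁻¹ + q⁻¹)⁻¹ r s := ⟨by rw [inv_inv, hpqrs]⟩
  calc lpNorm (f * g * h) s μ ≤ lpNorm (f * g) (p⁻¹ + q⁻¹)⁻¹ μ * lpNorm h r μ :=
        lpNorm_mul_le_lpNorm_mul_lpNorm (hg.mul hf) hh
    _ ≤ lpNorm f p μ * lpNorm g q μ * lpNorm h r μ :=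
        mul_le_mul_of_nonneg_right (lpNorm_mul_le_lpNorm_mul_lpNorm hf hg) lpNorm_nonneg

lemma toReal_inv_le_inv_two (hp : 2 ≤ p) : p⁻¹.toReal ≤ 2⁻¹ := by
  simpa using ENNReal.toReal_mono (by simp) (ENNReal.inv_le_inv.2 hp)

end Lp

section SimpleZeros

lemma locallyIntegrable_abs_sub_rpow {a : ℝ} (ha : -1 < a) (x : ℝ) :
    LocallyIntegrable (fun y ↦ |y - x| ^ a) := by
  have h0 : LocallyIntegrable (fun y : ℝ ↦ |y| ^ a) :=
    locallyIntegrable_of_norm_le_rpow (C := 1) (α := -a) (by simp) (by simpa using by linarith)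
      (.of_forall fun y ↦ by simp [abs_rpow_of_nonneg])
      (measurable_abs.pow_const a).aestronglyMeasurable
  rw [← map_sub_right_eq_self volume x] at h0
  exact (locallyIntegrable_map_homeomorph (Homeomorph.subRight x)).1 h0

lemma isTheta_abs_sub_of_deriv_ne_zero {f : ℝ → ℝ} {x : ℝ} (hx : f x = 0)
    (hf' : deriv f x ≠ 0) : (|f ·|) =Θ[𝓝 x] (|· - x|) := by
  have hderiv := (differentiableAt_of_deriv_ne_zero hf').hasDerivAt
  have htendsto : Tendsto (fun y ↦ (y, x)) (𝓝 x) (𝓝 x ×ˢ pure x) :=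
    tendsto_id.prodMk tendsto_const_pure
  have hsub : (fun y ↦ f y - f x) =Θ[𝓝 x] fun y ↦ y - x :=
    (hderiv.isTheta_sub hf').imp (·.comp_tendsto htendsto) (·.comp_tendsto htendsto)
  simpa [hx] using hsub.norm_left.norm_right

lemma locallyIntegrable_abs_rpow_of_deriv_ne_zero {f : ℝ → ℝ} {a : ℝ} (ha : -1 < a)
    (hf : Continuous f) (hf' : ∀ x, f x = 0 → deriv f x ≠ 0) :
    LocallyIntegrable (fun x ↦ |f x| ^ a) := by
  intro x
  have hmeas : StronglyMeasurableAtFilter (fun y ↦ |f y| ^ a) (𝓝 x) volume :=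
    ⟨Set.univ, univ_mem, (hf.abs.measurable.pow_const a).aestronglyMeasurable⟩
  by_cases hx : f x = 0
  · have hO : (fun y ↦ |f y| ^ a) =O[𝓝 x] fun y ↦ |y - x| ^ a :=
      ((isTheta_abs_sub_of_deriv_ne_zero hx (hf' x hx)).rpow
        (.of_forall fun y ↦ abs_nonneg _) (.of_forall fun y ↦ abs_nonneg _)).1
    exact hO.integrableAtFilter hmeas (locallyIntegrable_abs_sub_rpow ha x x)
  · have hO : (fun y ↦ |f y| ^ a) =O[𝓝 x] fun _ ↦ (1 : ℝ) :=
      (hf.abs.continuousAt.rpow_const (.inl (abs_ne_zero.2 hx))).isBigO_one ℝ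
    exact hO.integrableAtFilter hmeas (locallyIntegrable_const 1 x)

lemma memLp_abs_rpow_of_deriv_ne_zero {f : ℝ → ℝ} {b : ℝ} {p : ℝ≥0∞} (hp : p ≠ 0)
    (hp' : p ≠ ∞) (hb : -1 < b * p.toReal) (hf : Continuous f)
    (hf' : ∀ x, f x = 0 → deriv f x ≠ 0) {K : Set ℝ} (hK : IsCompact K) :
    MemLp (fun x ↦ |f x| ^ b) p (volume.restrict K) := by
  rw [← integrable_norm_rpow_iff (hf.abs.measurable.pow_const b).aestronglyMeasurable hp hp']
  refine ((locallyIntegrable_abs_rpow_of_deriv_ne_zero hb hf hf').integrableOn_isCompact hK).congr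
    (.of_forall fun x ↦ ?_)
  simp [abs_rpow_of_nonneg, Real.rpow_mul]

lemma deriv_mul_cos_sub_one_ne_zero {α y : ℝ} (hα : |α| ≠ 1) (hy : α * Real.cos y - 1 = 0) :
    deriv (fun y ↦ α * Real.cos y - 1) y ≠ 0 := by
  have hcos : α * Real.cos y = 1 := sub_eq_zero.1 hy
  have hα0 : α ≠ 0 := left_ne_zero_of_mul_eq_one hcos
  have hsin : Real.sin y ≠ 0 := fun h ↦ hα <| by
    have hcos' : |Real.cos y| = 1 := Real.abs_cos_eq_one_iff.2 (Real.sin_eq_zero_iff.1 h)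
    simpa [abs_mul, hcos'] using congrArg abs hcos
  simpa using ⟨hα0, hsin⟩

lemma memLp_abs_mul_cos_sub_one_rpow {α b : ℝ} (hα : |α| ≠ 1) {p : ℝ≥0∞} (hp : p ≠ 0)
    (hp' : p ≠ ∞) (hb : -1 < b * p.toReal) {K : Set ℝ} (hK : IsCompact K) :
    MemLp (fun y ↦ |α * Real.cos y - 1| ^ b) p (volume.restrict K) :=
  memLp_abs_rpow_of_deriv_ne_zero hp hp' hb (by fun_prop)
    (fun _ ↦ deriv_mul_cos_sub_one_ne_zero hα) hK

end SimpleZeros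

section SobolevNorm

/-- The `H^s` norm of the trigonometric polynomial with coefficients `c`, as a function of `c`;
`sobolevNorm 0 c` is the `ℓ²` norm of `c`. -/
noncomputable def sobolevNorm (s : ℝ) (c : ℤ →₀ ℂ) : ℝ :=
  √(∑ n ∈ c.support, (1 + (n : ℝ) ^ 2) ^ s * ‖c n‖ ^ 2)

/-- The Littlewood–Paley piece of `c` at frequencies `2 ^ k ≤ |n| < 2 ^ (k + 1)`. Since
`Nat.log 2 0 = 0`, the frequency `n = 0` belongs to the block `k = 0`. -/
def dyadicBlock (k : ℕ) (c : ℤ →₀ ℂ) : ℤ →₀ ℂ :=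
  c.filter fun n ↦ Nat.log 2 n.natAbs = k

variable (s : ℝ) (k : ℕ) (c : ℤ →₀ ℂ)

lemma sobolevNorm_nonneg : 0 ≤ sobolevNorm s c := Real.sqrt_nonneg _

lemma sobolevNorm_zero : sobolevNorm 0 c = √(∑ n ∈ c.support, ‖c n‖ ^ 2) := by
  simp [sobolevNorm]

lemma sqrt_tsum_eq_sobolevNorm :
    √(∑' n : ℤ, (1 + (n : ℝ) ^ 2) ^ s * ‖c n‖ ^ 2) = sobolevNorm s c := by
  rw [sobolevNorm, tsum_eq_sum (s := c.support)
    fun n hn ↦ by simp [Finsupp.notMem_support_iff.1 hn]]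

variable {k c} in
lemma mem_support_dyadicBlock {n : ℤ} :
    n ∈ (dyadicBlock k c).support ↔ n ∈ c.support ∧ Nat.log 2 n.natAbs = k := by
  rw [dyadicBlock, Finsupp.support_filter, mem_filter]

lemma sum_dyadicBlock :
    ∑ k ∈ c.support.image fun n ↦ Nat.log 2 n.natAbs, dyadicBlock k c = c := by
  ext n
  simp only [Finsupp.finsetSum_apply, dyadicBlock, Finsupp.filter_apply, sum_ite_eq]
  rw [ite_eq_left_iff]
  contrapose!
  exact fun hn ↦ mem_image_of_mem _ (Finsupp.mem_support_iff.2 hn.symm)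

lemma card_support_dyadicBlock_le : #(dyadicBlock k c).support ≤ 2 ^ (k + 2) := by
  have hsub : (dyadicBlock k c).support ⊆ Finset.Ioo (-2 ^ (k + 1)) (2 ^ (k + 1)) := by
    intro n hn
    have hlog : Nat.log 2 n.natAbs = k := (mem_support_dyadicBlock.1 hn).2
    have hlt : n.natAbs < 2 ^ (k + 1) := hlog ▸ Nat.lt_pow_succ_log_self one_lt_two _
    rw [Finset.mem_Ioo, ← abs_lt, Int.abs_eq_natAbs]
    exact_mod_cast hlt
  calc #(dyadicBlock k c).support ≤ #(Finset.Ioo (-2 ^ (k + 1) : ℤ) (2 ^ (k + 1))) :=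
        Finset.card_le_card hsub
    _ ≤ 2 ^ (k + 2) := by
        rw [Int.card_Ioo, Int.toNat_le]
        push_cast
        linarith [pow_succ (2 : ℤ) (k + 1)]

lemma four_pow_log_natAbs_le (n : ℤ) : (4 : ℝ) ^ Nat.log 2 n.natAbs ≤ 1 + (n : ℝ) ^ 2 := by
  obtain rfl | hn := eq_or_ne n 0
  · simp
  have hle : (2 : ℝ) ^ Nat.log 2 n.natAbs ≤ |(n : ℝ)| := by
    rw [← Int.cast_abs, Int.abs_eq_natAbs]
    exact_mod_cast Nat.pow_log_le_self 2 (Int.natAbs_ne_zero.2 hn)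
  calc (4 : ℝ) ^ Nat.log 2 n.natAbs = (2 ^ Nat.log 2 n.natAbs) ^ 2 := by
        rw [pow_right_comm]
        norm_num
    _ ≤ |(n : ℝ)| ^ 2 := by gcongr
    _ ≤ 1 + (n : ℝ) ^ 2 := by rw [sq_abs]; linarith

variable {s} in
lemma rpow_pow_mul_sobolevNorm_zero_dyadicBlock_le (hs : 0 ≤ s) :
    (2 ^ s) ^ k * sobolevNorm 0 (dyadicBlock k c) ≤ sobolevNorm s c := by
  have hpow : (((2 : ℝ) ^ s) ^ k) ^ 2 = ((4 : ℝ) ^ k) ^ s := by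
    rw [pow_right_comm, Real.rpow_pow_comm zero_le_two, Real.rpow_pow_comm (by positivity)]
    norm_num
  rw [sobolevNorm_zero, sobolevNorm, ← Real.sqrt_sq (by positivity : 0 ≤ ((2 : ℝ) ^ s) ^ k),
    ← Real.sqrt_mul (by positivity), hpow, mul_sum]
  refine Real.sqrt_le_sqrt ?_
  calc ∑ n ∈ (dyadicBlock k c).support, ((4 : ℝ) ^ k) ^ s * ‖dyadicBlock k c n‖ ^ 2
      ≤ ∑ n ∈ (dyadicBlock k c).support, (1 + (n : ℝ) ^ 2) ^ s * ‖c n‖ ^ 2 := by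
        refine sum_le_sum fun n hn ↦ ?_
        have hlog : Nat.log 2 n.natAbs = k := (mem_support_dyadicBlock.1 hn).2
        have happly : dyadicBlock k c n = c n := Finsupp.filter_apply_pos _ _ hlog
        rw [happly]
        gcongr
        exact hlog ▸ four_pow_log_natAbs_le n
    _ ≤ ∑ n ∈ c.support, (1 + (n : ℝ) ^ 2) ^ s * ‖c n‖ ^ 2 :=
        sum_le_sum_of_subset_of_nonneg (fun n hn ↦ (mem_support_dyadicBlock.1 hn).1)
          fun n _ _ ↦ by positivity

end SobolevNorm

section TrigPoly

variable {T : ℝ}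

/-- The trigonometric polynomial `∑ c_n e^{2πiny/T}` on the circle `ℝ / Tℤ`. -/
noncomputable def trigPoly (T : ℝ) : (ℤ →₀ ℂ) →ₗ[ℂ] C(AddCircle T, ℂ) :=
  Finsupp.linearCombination ℂ fourier

lemma trigPoly_apply (c : ℤ →₀ ℂ) (x : AddCircle T) :
    trigPoly T c x = ∑ n ∈ c.support, c n * fourier n x := by
  simp [trigPoly, Finsupp.linearCombination_apply, Finsupp.sum, ContinuousMap.sum_apply]

lemma tsum_mul_exp_eq_trigPoly (c : ℤ →₀ ℂ) (y : ℝ) :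
    ∑' n : ℤ, c n * cexp (I * n * y) = trigPoly (2 * π) c y := by
  rw [trigPoly_apply, tsum_eq_sum (s := c.support)
    fun n hn ↦ by rw [Finsupp.notMem_support_iff.1 hn, zero_mul]]
  refine sum_congr rfl fun n _ ↦ ?_
  rw [fourier_coe_apply]
  congr 2
  push_cast
  field_simp

lemma norm_trigPoly_apply_le (c : ℤ →₀ ℂ) (x : AddCircle T) :
    ‖trigPoly T c x‖ ≤ √(#c.support) * sobolevNorm 0 c := by
  calc ‖trigPoly T c x‖ ≤ ∑ n ∈ c.support, ‖c n‖ := by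
        rw [trigPoly_apply]
        exact norm_sum_le_of_le _ fun n _ ↦ by
          rw [norm_mul, fourier_apply, Circle.norm_coe, mul_one]
    _ ≤ √(#c.support * ∑ n ∈ c.support, ‖c n‖ ^ 2) :=
        Real.le_sqrt_of_sq_le sq_sum_le_card_mul_sum_sq
    _ = √(#c.support) * sobolevNorm 0 c := by
        rw [Real.sqrt_mul (Nat.cast_nonneg _), sobolevNorm_zero]

variable [hT : Fact (0 < T)]

lemma memLp_trigPoly (c : ℤ →₀ ℂ) (p : ℝ≥0∞) {μ : Measure (AddCircle T)} [IsFiniteMeasure μ] :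
    MemLp (trigPoly T c) p μ :=
  (trigPoly T c).continuous.memLp_of_hasCompactSupport (.of_compactSpace _)

lemma lpNorm_two_trigPoly (c : ℤ →₀ ℂ) :
    lpNorm (trigPoly T c) 2 haarAddCircle = sobolevNorm 0 c := by
  have hLp : lpNorm (trigPoly T c) 2 haarAddCircle =
      ‖ContinuousMap.toLp 2 haarAddCircle ℂ (trigPoly T c)‖ := by
    rw [Lp.norm_def, eLpNorm_congr_ae (ContinuousMap.coeFn_toLp _ _),
      toReal_eLpNorm (memLp_trigPoly c 2).1]
  have hsum : ContinuousMap.toLp 2 haarAddCircle ℂ (trigPoly T c) =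
      Finsupp.linearCombination ℂ (fourierLp (T := T) 2) c := by
    simp [trigPoly, Finsupp.linearCombination_apply, Finsupp.sum, map_sum, fourierLp]
  rw [hLp, hsum, sobolevNorm_zero, eq_comm,
    Real.sqrt_eq_iff_eq_sq (by positivity) (norm_nonneg _), ← RCLike.ofReal_inj (K := ℂ)]
  push_cast
  rw [← inner_self_eq_norm_sq_to_K (𝕜 := ℂ), orthonormal_fourier.inner_finsupp_eq_sum_left]
  simp [Finsupp.sum, Complex.conj_mul']

lemma lpNorm_top_trigPoly_le (c : ℤ →₀ ℂ) :
    lpNorm (trigPoly T c) ∞ haarAddCircle ≤ √(#c.support) * sobolevNorm 0 c := by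
  rw [← toReal_eLpNorm (memLp_trigPoly c ∞).1, eLpNorm_exponent_top]
  exact ENNReal.toReal_le_of_le_ofReal (mul_nonneg (Real.sqrt_nonneg _) (sobolevNorm_nonneg _ _))
    (eLpNormEssSup_le_of_ae_bound (.of_forall (norm_trigPoly_apply_le c)))

theorem lpNorm_trigPoly_le_card_rpow_mul {p : ℝ≥0∞} (hp : 2 ≤ p) (c : ℤ →₀ ℂ) :
    lpNorm (trigPoly T c) p haarAddCircle ≤
      (#c.support : ℝ) ^ (2⁻¹ - p⁻¹.toReal) * sobolevNorm 0 c := by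
  set θ := (2 / p).toReal with hθ
  have hθ' : θ = 2 * p⁻¹.toReal := by simp [hθ, div_eq_mul_inv]
  have hθ1 : 0 ≤ 1 - θ := by linarith [toReal_inv_le_inv_two hp]
  have hc : 0 ≤ sobolevNorm 0 c := sobolevNorm_nonneg 0 c
  calc lpNorm (trigPoly T c) p haarAddCircle
      ≤ lpNorm (trigPoly T c) ∞ haarAddCircle ^ (1 - θ) *
          lpNorm (trigPoly T c) 2 haarAddCircle ^ θ :=
        lpNorm_le_lpNorm_top_rpow_mul (memLp_trigPoly c ∞) (memLp_trigPoly c 2) (by simp) hp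
    _ ≤ (√(#c.support) * sobolevNorm 0 c) ^ (1 - θ) * sobolevNorm 0 c ^ θ := by
        rw [lpNorm_two_trigPoly]
        gcongr
        · exact lpNorm_nonneg
        · exact lpNorm_top_trigPoly_le c
    _ = (#c.support : ℝ) ^ (2⁻¹ - p⁻¹.toReal) * sobolevNorm 0 c := by
        rw [Real.mul_rpow (Real.sqrt_nonneg _) hc, mul_assoc,
          ← Real.rpow_add_of_nonneg hc hθ1 (by positivity), sub_add_cancel, Real.rpow_one,
          Real.sqrt_eq_rpow, ← Real.rpow_mul (Nat.cast_nonneg _), hθ']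
        ring_nf

lemma lpNorm_trigPoly_dyadicBlock_le {p : ℝ≥0∞} (hp : 2 ≤ p) {s : ℝ} (hs : 0 ≤ s) (k : ℕ)
    (c : ℤ →₀ ℂ) :
    lpNorm (trigPoly T (dyadicBlock k c)) p haarAddCircle ≤
      4 ^ (2⁻¹ - p⁻¹.toReal) * sobolevNorm s c * (2 ^ (2⁻¹ - p⁻¹.toReal - s)) ^ k := by
  have hβ : 0 ≤ 2⁻¹ - p⁻¹.toReal := sub_nonneg.2 (toReal_inv_le_inv_two hp)
  set β := 2⁻¹ - p⁻¹.toReal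
  have hpow : ((2 : ℝ) ^ (k + 2)) ^ β = 4 ^ β * (2 ^ β) ^ k := by
    rw [pow_add, Real.mul_rpow (by positivity) (by positivity), Real.rpow_pow_comm zero_le_two]
    norm_num [mul_comm]
  calc lpNorm (trigPoly T (dyadicBlock k c)) p haarAddCircle
      ≤ (#(dyadicBlock k c).support : ℝ) ^ β * sobolevNorm 0 (dyadicBlock k c) :=
        lpNorm_trigPoly_le_card_rpow_mul hp _
    _ ≤ (2 ^ (k + 2)) ^ β * (sobolevNorm s c / (2 ^ s) ^ k) := by
        gcongr
        · exact sobolevNorm_nonneg _ _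
        · exact_mod_cast card_support_dyadicBlock_le k c
        · rw [le_div_iff₀' (by positivity)]
          exact rpow_pow_mul_sobolevNorm_zero_dyadicBlock_le k c hs
    _ = 4 ^ β * sobolevNorm s c * (2 ^ (β - s)) ^ k := by
        rw [hpow, Real.rpow_sub two_pos β s, div_pow]
        ring

theorem exists_lpNorm_trigPoly_le_sobolevNorm {p : ℝ≥0∞} (hp : 2 ≤ p) {s : ℝ}
    (hs : 2⁻¹ - p⁻¹.toReal < s) :
    ∃ C > 0, ∀ c, lpNorm (trigPoly T c) p haarAddCircle ≤ C * sobolevNorm s c := by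
  have hβ : 0 ≤ 2⁻¹ - p⁻¹.toReal := sub_nonneg.2 (toReal_inv_le_inv_two hp)
  set β := 2⁻¹ - p⁻¹.toReal
  have hρ0 : (0 : ℝ) ≤ 2 ^ (β - s) := by positivity
  have hρ1 : (2 : ℝ) ^ (β - s) < 1 := Real.rpow_lt_one_of_one_lt_of_neg one_lt_two (sub_neg.2 hs)
  refine ⟨4 ^ β * (1 - 2 ^ (β - s))⁻¹, mul_pos (by positivity) (inv_pos.2 (sub_pos.2 hρ1)),
    fun c ↦ ?_⟩
  have hc : 0 ≤ 4 ^ β * sobolevNorm s c := mul_nonneg (by positivity) (sobolevNorm_nonneg s c)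
  set K := c.support.image fun n ↦ Nat.log 2 n.natAbs
  calc lpNorm (trigPoly T c) p haarAddCircle
      = lpNorm (∑ k ∈ K, ⇑(trigPoly T (dyadicBlock k c))) p haarAddCircle := by
        rw [← ContinuousMap.coe_sum, ← map_sum, sum_dyadicBlock]
    _ ≤ ∑ k ∈ K, lpNorm (trigPoly T (dyadicBlock k c)) p haarAddCircle :=
        lpNorm_sum_le (fun k _ ↦ memLp_trigPoly _ p) (one_le_two.trans hp)
    _ ≤ ∑ k ∈ K, 4 ^ β * sobolevNorm s c * (2 ^ (β - s)) ^ k :=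
        sum_le_sum fun k _ ↦ lpNorm_trigPoly_dyadicBlock_le hp (hβ.trans hs.le) k c
    _ ≤ 4 ^ β * sobolevNorm s c * (1 - 2 ^ (β - s))⁻¹ := by
        rw [← mul_sum, ← tsum_geometric_of_lt_one hρ0 hρ1]
        gcongr
        exact (summable_geometric_of_lt_one hρ0 hρ1).sum_le_tsum _ fun _ _ ↦ by positivity
    _ = 4 ^ β * (1 - 2 ^ (β - s))⁻¹ * sobolevNorm s c := by ring

lemma measurePreserving_coe_Ioc :
    MeasurePreserving ((↑) : ℝ → AddCircle T) (volume.restrict (Set.Ioc 0 T)) := by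
  simpa using AddCircle.measurePreserving_mk T 0

lemma memLp_trigPoly_coe (c : ℤ →₀ ℂ) (p : ℝ≥0∞) :
    MemLp (fun y : ℝ ↦ trigPoly T c y) p (volume.restrict (Set.Ioc 0 T)) :=
  (memLp_trigPoly c p).comp_measurePreserving measurePreserving_coe_Ioc

lemma lpNorm_trigPoly_coe (c : ℤ →₀ ℂ) (p : ℝ≥0∞) :
    lpNorm (fun y : ℝ ↦ trigPoly T c y) p (volume.restrict (Set.Ioc 0 T)) =
      T ^ p.toReal⁻¹ * lpNorm (trigPoly T c) p haarAddCircle := by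
  have hmeas : AEStronglyMeasurable (trigPoly T c) :=
    (trigPoly T c).continuous.aestronglyMeasurable
  have hvol : (volume : Measure (AddCircle T)) = T.toNNReal • haarAddCircle :=
    volume_eq_smul_haarAddCircle
  have hT0 : T.toNNReal ≠ 0 := by simpa using hT.out
  calc lpNorm (fun y : ℝ ↦ trigPoly T c y) p (volume.restrict (Set.Ioc 0 T))
      = lpNorm (trigPoly T c) p volume := by
        rw [← toReal_eLpNorm (memLp_trigPoly_coe c p).1, ← toReal_eLpNorm hmeas,
          ← eLpNorm_comp_measurePreserving hmeas measurePreserving_coe_Ioc]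
        rfl
    _ = T ^ p.toReal⁻¹ * lpNorm (trigPoly T c) p haarAddCircle := by
        rw [hvol, lpNorm_smul_measure_of_ne_zero hT0, NNReal.smul_def, smul_eq_mul, NNReal.coe_rpow,
          Real.coe_toNNReal _ hT.out.le]

lemma exists_lpNorm_trigPoly_coe_le_sobolevNorm {p : ℝ≥0∞} (hp : 2 ≤ p) {s : ℝ}
    (hs : 2⁻¹ - p⁻¹.toReal < s) :
    ∃ C > 0, ∀ c, lpNorm (fun y : ℝ ↦ trigPoly T c y) p (volume.restrict (Set.Ioc 0 T)) ≤
      C * sobolevNorm s c := by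
  obtain ⟨C, hC, hle⟩ := exists_lpNorm_trigPoly_le_sobolevNorm (T := T) hp hs
  have hT0 := hT.out
  refine ⟨T ^ p.toReal⁻¹ * C, by positivity, fun c ↦ ?_⟩
  rw [lpNorm_trigPoly_coe, mul_assoc]
  gcongr
  exact hle c

theorem exists_setIntegral_mul_norm_trigPoly_mul_norm_trigPoly_le {p q r : ℝ≥0∞}
    (hrpq : r⁻¹ + p⁻¹ + q⁻¹ = 1) (hp : 2 ≤ p) (hq : 2 ≤ q) {s t : ℝ}
    (hs : 2⁻¹ - p⁻¹.toReal < s) (ht : 2⁻¹ - q⁻¹.toReal < t)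
    {w : ℝ → ℝ} (hw : MemLp w r (volume.restrict (Set.Ioc 0 T))) :
    ∃ C > 0, ∀ c d, ∫ y in Set.Ioc 0 T, w y * ‖trigPoly T c y‖ * ‖trigPoly T d y‖ ≤
      C * sobolevNorm s c * sobolevNorm t d := by
  obtain ⟨A, hA, hembA⟩ := exists_lpNorm_trigPoly_coe_le_sobolevNorm (T := T) hp hs
  obtain ⟨B, hB, hembB⟩ := exists_lpNorm_trigPoly_coe_le_sobolevNorm (T := T) hq ht
  set μ : Measure ℝ := volume.restrict (Set.Ioc 0 T)
  have hW : 0 ≤ lpNorm w r μ := lpNorm_nonneg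
  refine ⟨(lpNorm w r μ + 1) * A * B, by positivity, fun c d ↦ ?_⟩
  have hc := memLp_trigPoly_coe (T := T) c p
  have hd := memLp_trigPoly_coe (T := T) d q
  set f : ℝ → ℂ := fun y ↦ trigPoly T c y
  set g : ℝ → ℂ := fun y ↦ trigPoly T d y
  calc ∫ y, w y * ‖f y‖ * ‖g y‖ ∂μ
      ≤ ∫ y, ‖(w * (‖f ·‖) * (‖g ·‖)) y‖ ∂μ :=
        (le_abs_self _).trans (norm_integral_le_integral_norm (w * (‖f ·‖) * (‖g ·‖)))
    _ = lpNorm (w * (‖f ·‖) * (‖g ·‖)) 1 μ :=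
        (lpNorm_one_eq_integral_norm ((hw.1.mul hc.1.norm).mul hd.1.norm)).symm
    _ ≤ lpNorm w r μ * lpNorm f p μ * lpNorm g q μ := by
        rw [← lpNorm_norm hc.1, ← lpNorm_norm hd.1]
        exact lpNorm_mul_mul_le (by rw [hrpq, inv_one]) hw hc.norm hd.norm
    _ ≤ (lpNorm w r μ + 1) * (A * sobolevNorm s c) * (B * sobolevNorm t d) := by
        have hcs := sobolevNorm_nonneg s c
        gcongr
        · exact lpNorm_nonneg
        · exact lpNorm_nonneg
        · exact le_add_of_nonneg_right zero_le_one
        · exact hembA c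
        · exact hembB d
    _ = (lpNorm w r μ + 1) * A * B * sobolevNorm s c * sobolevNorm t d := by ring

end TrigPoly

lemma exists_holderExponents {s t : ℝ} (hs : 0 < s) (ht : 0 < t) (hst : 1 / 2 < s + t) :
    ∃ p q r : ℝ≥0∞, 2 ≤ p ∧ 2 ≤ q ∧ r ≠ 0 ∧ r < 2 ∧ r⁻¹ + p⁻¹ + q⁻¹ = 1 ∧
      2⁻¹ - p⁻¹.toReal < s ∧ 2⁻¹ - q⁻¹.toReal < t := by
  obtain ⟨a, ha, hat⟩ : ∃ a, max 0 (1 / 2 - s) < a ∧ a < 1 / 2 - max 0 (1 / 2 - t) :=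
    exists_between (by grind)
  obtain ⟨b, hb, hba⟩ : ∃ b, max 0 (1 / 2 - t) < b ∧ b < 1 / 2 - a :=
    exists_between (by linarith)
  obtain ⟨ha0, has⟩ := max_lt_iff.1 ha
  obtain ⟨hb0, hbt⟩ := max_lt_iff.1 hb
  have htwo : (2 : ℝ≥0∞)⁻¹ = .ofReal 2⁻¹ := by simp [ENNReal.ofReal_inv_of_pos]
  have two_le_inv {x : ℝ} (hx : x < 1 / 2) : 2 ≤ (ENNReal.ofReal x)⁻¹ := by
    rw [ENNReal.le_inv_iff_le_inv, htwo]
    exact ENNReal.ofReal_le_ofReal (by linarith)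
  refine ⟨(.ofReal a)⁻¹, (.ofReal b)⁻¹, (.ofReal (1 - a - b))⁻¹, two_le_inv (by linarith),
    two_le_inv (by linarith), by simp, ?_, ?_, ?_, ?_⟩
  · rw [ENNReal.inv_lt_iff_inv_lt, htwo, ENNReal.ofReal_lt_ofReal_iff] <;> linarith
  · simp only [inv_inv]
    rw [← ENNReal.ofReal_add (by linarith) ha0.le, ← ENNReal.ofReal_add (by linarith) hb0.le,
      sub_right_comm, sub_add_cancel, sub_add_cancel, ENNReal.ofReal_one]
  · rw [inv_inv, ENNReal.toReal_ofReal ha0.le]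
    linarith
  · rw [inv_inv, ENNReal.toReal_ofReal hb0.le]
    linarith

theorem degenerate_weight_estimate_general {α s t : ℝ} (hα : |α| ≠ 1) (hs : 0 < s) (ht : 0 < t)
    (hst : 1 / 2 < s + t) :
    ∃ C : ℝ, 0 < C ∧
      ∀ c d : ℤ → ℂ, (Function.support c).Finite → (Function.support d).Finite →
        ∫ y in Set.Ioc (0 : ℝ) (2 * π),
            |α * Real.cos y - 1| ^ (-(1 / 2 : ℝ))
              * ‖∑' n : ℤ, c n * Complex.exp (Complex.I * (n : ℂ) * (y : ℂ))‖
              * ‖∑' n : ℤ, d n * Complex.exp (Complex.I * (n : ℂ) * (y : ℂ))‖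
          ≤ C * Real.sqrt (∑' n : ℤ, (1 + (n : ℝ) ^ 2) ^ s * ‖c n‖ ^ 2)
              * Real.sqrt (∑' n : ℤ, (1 + (n : ℝ) ^ 2) ^ t * ‖d n‖ ^ 2) := by
  obtain ⟨p, q, r, hp, hq, hr0, hr2, hrpq, hps, hqt⟩ := exists_holderExponents hs ht hst
  have hweight : MemLp (fun y ↦ |α * Real.cos y - 1| ^ (-(1 / 2 : ℝ))) r
      (volume.restrict (Set.Ioc 0 (2 * π))) := by
    have hr : r.toReal < 2 := ENNReal.toReal_lt_of_lt_ofReal (by simpa using hr2)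
    have hIcc := memLp_abs_mul_cos_sub_one_rpow hα hr0 hr2.ne_top (b := -(1 / 2)) (by linarith)
      (isCompact_Icc (a := 0) (b := 2 * π))
    exact hIcc.mono_measure (Measure.restrict_mono Set.Ioc_subset_Icc_self le_rfl)
  have : Fact (0 < 2 * π) := ⟨two_pi_pos⟩
  obtain ⟨C, hC, hle⟩ :=
    exists_setIntegral_mul_norm_trigPoly_mul_norm_trigPoly_le hrpq hp hq hps hqt hweight
  refine ⟨C, hC, fun c d hc hd ↦ ?_⟩
  lift c to ℤ →₀ ℂ using hc
  lift d to ℤ →₀ ℂ using hd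
  simpa only [tsum_mul_exp_eq_trigPoly, sqrt_tsum_eq_sobolevNorm] using hle c d

/-- Estimate (5.functional): for `α > 1` and `0 < δ < 1/2` there is `C > 0` such that
for all trigonometric polynomials `u = ∑ c_n e^{iny}` and `ζ = ∑ d_n e^{iny}`,
`∫_0^{2π} |α cos y - 1|^{-1/2} |u(y)| |ζ(y)| dy ≤ C ‖u‖_{H^{1/2}} ‖ζ‖_{H^δ}`,
with `‖∑ c_n e^{iny}‖_{H^s}² = ∑ (1+n²)^s |c_n|²`. -/
theorem degenerate_weight_estimate (α : ℝ) (hα : 1 < α) (δ : ℝ) (hδ0 : 0 < δ)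
    (hδ : δ < 1 / 2) :
    ∃ C : ℝ, 0 < C ∧
      ∀ c d : ℤ → ℂ, (Function.support c).Finite → (Function.support d).Finite →
        ∫ y in Set.Ioc (0 : ℝ) (2 * π),
            |α * Real.cos y - 1| ^ (-(1 / 2 : ℝ))
              * ‖∑' n : ℤ, c n * Complex.exp (Complex.I * (n : ℂ) * (y : ℂ))‖
              * ‖∑' n : ℤ, d n * Complex.exp (Complex.I * (n : ℂ) * (y : ℂ))‖
          ≤ C * Real.sqrt (∑' n : ℤ, (1 + (n : ℝ) ^ 2) ^ ((1 / 2 : ℝ)) * ‖c n‖ ^ 2)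
              * Real.sqrt (∑' n : ℤ, (1 + (n : ℝ) ^ 2) ^ δ * ‖d n‖ ^ 2) := by
  exact degenerate_weight_estimate_general (by grind) one_half_pos hδ0 (by linarith)
end
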